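/- arXiv:2604.07718 — 2 statements merged into one kernel-verified Lean document; each statement's English description precedes it below -/
import Mathlib

section
/- Fix integers G, K, L with 1 ≤ G ≤ K and L ≥ 1. Let ν be a measure on ℝ^L, let 𝒵 ⊆ ℝ^L with ν(ℝ^L ∖ 𝒵) = 0, and let z* ∈ 𝒵 be such that ν assigns strictly positive measure to every open neighbourhood of z*. Suppose: r₀ : ℝ^G → ℝ^G is a locally Lipschitz bijection with locally Lipschitz inverse, differentiable with det Dr₀(y) > 0 at Lebesgue-almost every y; for every z ∈ 𝒵, the map x ↦ r₁(x, z) from ℝ^K to ℝ^G is locally Lipschitz, surjective, and differentiable in x with rank D_x r₁(x, z) = G at almost every x; f_U is an admissible density on ℝ^G satisfying the local-maximum condition; σ : ℝ^L → ℝ^{G×G} takes values in the diagonal matrices with strictly positive diagonal entries, σ(z*) = I_G, and σ is continuous at z*. Let r̃₀ be any locally Lipschitz bijection ℝ^G → ℝ^G with det Dr̃₀(y) > 0 at almost every y, and let r̃₁ : ℝ^K × ℝ^L → ℝ^G be such that x ↦ r̃₁(x, z) is locally Lipschitz for every z ∈ 𝒵. Then there exist σ̃ : ℝ^L → ℝ^{G×G}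 taking values in diagonal matrices with strictly positive entries, with σ̃(z*) = I_G and σ̃ continuous at z*, and an admissible density f_Ũ on ℝ^G, such that for ν-almost every z ∈ 𝒵, f_U(σ(z)⁻¹(r₀(y) + r₁(x, z)))·det(σ(z)⁻¹ Dr₀(y)) = f_Ũ(σ̃(z)⁻¹(r̃₀(y) + r̃₁(x, z)))·det(σ̃(z)⁻¹ Dr̃₀(y)) for Lebesgue-almost every (y, x), if and only if there exists Q ∈ SO(G) such that for ν-almost every z ∈ 𝒵: r̃₀(y) + r̃₁(x, z) = Q(r₀(y) + r₁(x, z)) for all (y, x) ∈ ℝ^G × ℝ^K, and Q σ(z)² Qᵀ is a diagonal matrix; moreover, in that case σ̃(z)² = Q σ(z)² Qᵀ for ν-almost every z ∈ 𝒵. -/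
open MeasureTheory Matrix

noncomputable section

/-- `E n` is Euclidean space `ℝ^n`. -/
abbrev E (n : ℕ) : Type := EuclideanSpace ℝ (Fin n)

/-- Action of a matrix on a Euclidean vector. -/
def mulVecE {m n : ℕ} (A : Matrix (Fin m) (Fin n) ℝ) (x : E n) : E m := WithLp.toLp 2 (A.mulVec x)

/-- An admissible density on `ℝ^G`: continuously differentiable, everywhere strictly positive,
integrating to one, with zero mean and identity covariance (stated componentwise). -/
def AdmissibleDensity {G : ℕ} (ρ : E G → ℝ) : Prop :=
  ContDiff ℝ 1 ρ ∧ (∀ u, 0 < ρ u) ∧ ((∫ u, ρ u) = 1) ∧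
    (∀ i, (∫ u : E G, u i * ρ u) = 0) ∧
    (∀ i j, (∫ u : E G, u i * u j * ρ u) = if i = j then 1 else 0)

/-- The local-maximum condition: `ρ` has a local maximum at some `u₀`, is twice continuously
differentiable in a neighbourhood of `u₀`, and has negative definite Hessian there. -/
def LocalMaxCondition {G : ℕ} (ρ : E G → ℝ) : Prop :=
  ∃ u₀ : E G, IsLocalMax ρ u₀ ∧ ContDiffAt ℝ 2 ρ u₀ ∧
    ∀ v : E G, v ≠ 0 → iteratedFDeriv ℝ 2 ρ u₀ ![v, v] < 0

/-- A skedastic function: diagonal values with strictly positive diagonal entries, equal to the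
identity at the normalisation point `zstar`, and continuous there. -/
def SkedasticFn {G L : ℕ} (σ : E L → Matrix (Fin G) (Fin G) ℝ) (zstar : E L) : Prop :=
  (∀ z, (σ z).IsDiag) ∧ (∀ z i, 0 < σ z i i) ∧ σ zstar = 1 ∧ ContinuousAt σ zstar

/-!
Taking logarithms and moving from almost every `(y, x)` to every `(y, x)` by continuity, an
observational equivalence at fixed `z` becomes `g (v + r₁ x) = gt (φ v + rt₁ x) + j v`, where
`v = r₀ y`, `φ = rt₀ ∘ r₀⁻¹` and `g`, `gt` are the log-densities of the scaled disturbances.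

The left-hand side depends on `v` and `x` through `v + r₁ x` only. Differentiating in `x` where `r₁`
has full rank shows that the critical points of `g` and `gt` correspond, and nondegeneracy of the
maximum of `g` forces `φ` to be differentiable. Comparing second derivatives at the maximum along
all `v` then shows that the derivatives of `φ` differ by isometries of one quadratic form; a map
whose derivative is everywhere an isometry is affine, hence so is `φ`. Equality of means and
covariances removes the translation and gives `A σ(z)² Aᵀ = σt(z)²` for the linear part `A`.

The maps `r₀` and `rt₀` do not depend on `z`, so neither does `A`, and `z → zstar` gives `A Aᵀ = 1`.
Conversely, uniqueness of positive square roots turns `σt² = Q σ² Qᵀ` into `σt = Q σ Qᵀ`, and the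
rotated density `f ∘ Qᵀ` then reproduces the data.
-/

section Calculus

open Filter Topology Asymptotics

variable {X V W : Type*} [NormedAddCommGroup X] [NormedAddCommGroup V] [NormedAddCommGroup W]

lemma isBigO_sub_of_locallyLipschitz {f : X → V} (hf : LocallyLipschitz f) (x : X) :
    (f · - f x) =O[𝓝 x] (· - x) := by
  obtain ⟨C, t, ht, hC⟩ := hf x
  refine .of_bound C ?_
  filter_upwards [ht] with x' hx'
  simpa only [dist_eq_norm] using hC.dist_le_mul x' hx' x (mem_of_mem_nhds ht)

variable [NormedSpace ℝ X] [NormedSpace ℝ V] [NormedSpace ℝ W]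

lemma dense_setOf_and_differentiableAt [FiniteDimensional ℝ X] [MeasurableSpace X] [BorelSpace X]
    [FiniteDimensional ℝ V] {μ : Measure X} [μ.IsAddHaarMeasure] {f : X → V}
    (hf : LocallyLipschitz f) {p : X → Prop} (hp : ∀ᵐ x ∂μ, p x) :
    Dense {x | p x ∧ DifferentiableAt ℝ f x} := by
  refine dense_iff_inter_open.2 fun U hU ⟨x, hx⟩ ↦ ?_
  obtain ⟨C, t, ht, hC⟩ := hf x
  have hμ : μ (interior t ∩ U) ≠ 0 :=
    (μ.measure_pos_of_mem_nhds (inter_mem (interior_mem_nhds.2 ht) (hU.mem_nhds hx))).ne'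
  obtain ⟨y, hyU, hpy, hy⟩ := Measure.exists_mem_of_measure_ne_zero_of_ae hμ
    (ae_restrict_of_ae (hp.and (hC.ae_differentiableWithinAt_of_mem (μ := μ))))
  exact ⟨y, hyU.2, hpy, (hy (interior_subset hyU.1)).differentiableAt
    (mem_interior_iff_mem_nhds.1 hyU.1)⟩

lemma hasFDerivAt_zero_comp_of_isBigO {φ : X → V} {x : X} (hφ : (φ · - φ x) =O[𝓝 x] (· - x))
    {f : V → W} (hf : HasFDerivAt f (0 : V →L[ℝ] W) (φ x)) :
    HasFDerivAt (f ∘ φ) (0 : X →L[ℝ] W) x := by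
  have hx : Tendsto (· - x) (𝓝 x) (𝓝 0) := tendsto_sub_nhds_zero_iff.2 tendsto_id
  have hφx : Tendsto φ (𝓝 x) (𝓝 (φ x)) := tendsto_sub_nhds_zero_iff.1 (hφ.trans_tendsto hx)
  refine .of_isLittleO ?_
  simpa [Function.comp_def] using (hf.isLittleO.comp_tendsto hφx).trans_isBigO hφ

lemma surjective_fderiv_of_comp_eq {φ : X → V} {x : X} (hφ : (φ · - φ x) =O[𝓝 x] (· - x))
    {Γ : X → W} {Γt : V → W} {A : X →L[ℝ] W} {B : V →L[ℝ] W} [FiniteDimensional ℝ W]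
    (hΓ : HasFDerivAt Γ A x) (hΓt : HasFDerivAt Γt B (φ x)) (hcomp : ∀ v, Γt (φ v) = Γ v)
    (hA : Function.Surjective A) : Function.Surjective B := by
  rw [← B.coe_coe, ← LinearMap.range_eq_top]
  by_contra hB
  obtain ⟨ℓ, hℓ, hBℓ⟩ := Submodule.exists_le_ker_of_lt_top _ (lt_top_iff_ne_top.2 hB)
  let ℓc : W →L[ℝ] ℝ := ℓ.toContinuousLinearMap
  have hℓB : ℓc.comp B = 0 := by
    ext v
    exact hBℓ (LinearMap.mem_range_self B.toLinearMap v)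
  have hℓΓt : HasFDerivAt (ℓc ∘ Γt) (0 : V →L[ℝ] ℝ) (φ x) := hℓB ▸ ℓc.hasFDerivAt.comp _ hΓt
  have hΓeq : (ℓc ∘ Γt) ∘ φ = ℓc ∘ Γ := funext fun v ↦ congrArg ℓc (hcomp v)
  have hℓA : ℓc.comp A = 0 := (ℓc.hasFDerivAt.comp x hΓ).unique
    (hΓeq ▸ hasFDerivAt_zero_comp_of_isBigO hφ hℓΓt)
  refine hℓ (LinearMap.ext fun w ↦ ?_)
  obtain ⟨d, rfl⟩ := hA w
  exact congr($hℓA d)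

lemma exists_hasStrictFDerivAt_of_comp_eq [FiniteDimensional ℝ V] {φ : V → V} {x : V}
    (hφ : (φ · - φ x) =O[𝓝 x] (· - x)) (hφc : ContinuousAt φ x) {Γ Γt : V → W} {A : V ≃L[ℝ] W}
    {B : V →L[ℝ] W} (hΓ : HasStrictFDerivAt Γ (A : V →L[ℝ] W) x)
    (hΓt : HasStrictFDerivAt Γt B (φ x)) (hcomp : ∀ v, Γt (φ v) = Γ v) :
    ∃ D : V ≃L[ℝ] V, HasStrictFDerivAt φ (D : V →L[ℝ] V) x := by
  have : FiniteDimensional ℝ W := A.toLinearEquiv.finiteDimensional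
  have hBsurj := surjective_fderiv_of_comp_eq hφ hΓ.hasFDerivAt hΓt.hasFDerivAt hcomp A.surjective
  have hBinj : Function.Injective B :=
    (LinearMap.injective_iff_surjective_of_finrank_eq_finrank (f := B.toLinearMap)
      A.toLinearEquiv.finrank_eq).2 hBsurj
  obtain ⟨B, rfl⟩ : ∃ B' : V ≃L[ℝ] W, (B' : V →L[ℝ] W) = B :=
    ⟨(LinearEquiv.ofBijective B.toLinearMap ⟨hBinj, hBsurj⟩).toContinuousLinearEquiv, rfl⟩
  have hinv := hcomp x ▸ hΓt.to_localInverse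
  refine ⟨A.trans B.symm, (hinv.comp x hΓ).congr_of_eventuallyEq ?_⟩
  filter_upwards [hφc.eventually hΓt.eventually_left_inverse] with v hv
  rwa [hcomp v] at hv

end Calculus

section Rigidity

open Filter Topology

variable {F : Type*} [NormedAddCommGroup F] [InnerProductSpace ℝ F] {κ : F → F}
  {D : F → F ≃ₗᵢ[ℝ] F}

lemma exists_mem_nhds_norm_sub_eq_of_hasStrictFDerivAt_isometry [CompleteSpace F]
    (hκ : ∀ a, HasStrictFDerivAt κ (D a : F →L[ℝ] F) a) (a : F) :
    ∃ s ∈ 𝓝 a, ∀ x ∈ s, ∀ y ∈ s, ‖κ x - κ y‖ = ‖x - y‖ := by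
  let P : OpenPartialHomeomorph F F :=
    HasStrictFDerivAt.toOpenPartialHomeomorph κ (f' := (D a).toContinuousLinearEquiv) (hκ a)
  obtain ⟨ε, hε, hball⟩ := Metric.isOpen_iff.1 P.open_target (κ a)
    (HasStrictFDerivAt.image_mem_toOpenPartialHomeomorph_target (hκ a))
  have hsource : P.source ∈ 𝓝 a := P.open_source.mem_nhds
    (HasStrictFDerivAt.mem_toOpenPartialHomeomorph_source (hκ a))
  have hs : P.source ∩ κ ⁻¹' Metric.ball (κ a) ε ∈ 𝓝 a :=
    inter_mem hsource ((hκ a).continuousAt (Metric.ball_mem_nhds _ hε))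
  -- The mean value inequality for `κ` on the whole space, and for its inverse on a ball.
  refine ⟨_, hs, fun x hx y hy ↦ le_antisymm ?_ ?_⟩
  · have hle := convex_univ.norm_image_sub_le_of_norm_hasFDerivWithin_le
      (fun z _ ↦ (hκ z).hasFDerivAt.hasFDerivWithinAt)
      (fun z _ ↦ (D z).toLinearIsometry.norm_toContinuousLinearMap_le)
      (Set.mem_univ y) (Set.mem_univ x)
    rwa [one_mul] at hle
  · have hsymm : ∀ b ∈ Metric.ball (κ a) ε, HasFDerivWithinAt P.symm
        ((D (P.symm b)).symm.toContinuousLinearEquiv : F →L[ℝ] F) (Metric.ball (κ a) ε) b :=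
      fun b hb ↦ (P.hasFDerivAt_symm (f' := (D (P.symm b)).toContinuousLinearEquiv) (hball hb)
        (hκ (P.symm b)).hasFDerivAt).hasFDerivWithinAt
    have hle := (convex_ball (κ a) ε).norm_image_sub_le_of_norm_hasFDerivWithin_le hsymm
      (fun b _ ↦ (D (P.symm b)).symm.toLinearIsometry.norm_toContinuousLinearMap_le)
      hy.2 hx.2
    rwa [one_mul, show P.symm (κ x) = x from P.left_inv hx.1,
      show P.symm (κ y) = y from P.left_inv hy.1] at hle

lemma isometry_fderiv_eq_of_norm_sub_eq (hκ : ∀ a, HasFDerivAt κ (D a : F →L[ℝ] F) a) {s : Set F}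
    (hs : ∀ x ∈ s, ∀ y ∈ s, ‖κ x - κ y‖ = ‖x - y‖) {a b : F} (ha : s ∈ 𝓝 a) (hb : s ∈ 𝓝 b) :
    D a = D b := by
  have hDκ : ∀ d, ∀ y ∈ s, inner ℝ (D a d) (κ a - κ y) = inner ℝ d (a - y) := by
    intro d y hy
    have hl := ((hκ a).sub_const (κ y)).norm_sq
    have hr := ((hasFDerivAt_id (𝕜 := ℝ) a).sub_const y).norm_sq
    have heq := congr($(hl.unique (hr.congr_of_eventuallyEq ?_)) d)
    · rw [real_inner_comm, real_inner_comm (a - y)]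
      simpa [inner_sub_left] using heq
    · filter_upwards [ha] with x hx
      simp [hs x hx y hy]
  have hDD : ∀ d e, inner ℝ (D a d) (D b e) = inner ℝ d e := by
    intro d e
    have hl := (innerSL ℝ (D a d)).hasFDerivAt.comp b ((hκ b).const_sub (κ a))
    have hr := (innerSL ℝ d).hasFDerivAt.comp b ((hasFDerivAt_id b).const_sub a)
    have heq := congr($(hl.unique (hr.congr_of_eventuallyEq ?_)) e)
    · simpa using heq
    · filter_upwards [hb] with y hy using hDκ d y hy
  ext e
  refine ext_inner_left ℝ fun w ↦ ?_
  obtain ⟨d, rfl⟩ := (D a).surjective w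
  rw [hDD, (D a).inner_map_map]

lemma isometry_fderiv_const [CompleteSpace F]
    (hκ : ∀ a, HasStrictFDerivAt κ (D a : F →L[ℝ] F) a) (a b : F) : D a = D b := by
  refine IsLocallyConstant.apply_eq_of_preconnectedSpace
    ((IsLocallyConstant.iff_eventually_eq D).2 fun a ↦ ?_) a b
  obtain ⟨s, hsa, hs⟩ :=
    exists_mem_nhds_norm_sub_eq_of_hasStrictFDerivAt_isometry hκ a
  filter_upwards [eventually_mem_nhds_iff.2 hsa] with b hb
  exact isometry_fderiv_eq_of_norm_sub_eq (fun a ↦ (hκ a).hasFDerivAt) hs hb hsa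

end Rigidity

lemma exists_equiv_euclideanSpace_norm_sq_eq_of_posDef {V : Type*} [NormedAddCommGroup V]
    [NormedSpace ℝ V] [FiniteDimensional ℝ V] {Q : QuadraticForm ℝ V} (hQ : Q.PosDef) :
    ∃ M : V ≃L[ℝ] E (Module.finrank ℝ V), ∀ d, ‖M d‖ ^ 2 = Q d := by
  obtain ⟨w, ⟨e⟩⟩ := Q.equivalent_signType_weighted_sum_squared
  have hw : w = 1 := by
    funext i
    have hpos : 0 < (w i : ℝ) := by
      have hQi := hQ (e.symm (Pi.single i 1)) (by simp)
      rw [e.symm.map_app, QuadraticMap.weightedSumSquares_apply,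
        Finset.sum_eq_single i (by simp +contextual) (by simp)] at hQi
      simpa using hQi
    cases hi : w i
    case pos => rfl
    all_goals norm_num [hi] at hpos
  refine ⟨e.toLinearEquiv.toContinuousLinearEquiv.trans
    (EuclideanSpace.equiv (Fin (Module.finrank ℝ V)) ℝ).symm, fun d ↦ ?_⟩
  rw [← e.map_app d, EuclideanSpace.real_norm_sq_eq, QuadraticMap.weightedSumSquares_apply]
  refine Finset.sum_congr rfl fun i _ ↦ ?_
  simp [hw, sq]

/-- A critical point `u₀` of `g` at which the derivative of `g` is itself differentiable, with
negative definite derivative `H`. -/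
structure NondegenerateMax {V : Type*} [NormedAddCommGroup V] [NormedSpace ℝ V] (g : V → ℝ)
    (u₀ : V) (H : V →L[ℝ] V →L[ℝ] ℝ) : Prop where
  fderiv_eq_zero : fderiv ℝ g u₀ = 0
  hasFDerivAt_fderiv : HasFDerivAt (fderiv ℝ g) H u₀
  neg_def : ∀ d ≠ 0, H d d < 0

namespace NondegenerateMax

open Filter Topology

variable {V V' : Type*} [NormedAddCommGroup V] [NormedSpace ℝ V] [NormedAddCommGroup V']
  [NormedSpace ℝ V'] {g : V → ℝ} {u₀ : V} {H : V →L[ℝ] V →L[ℝ] ℝ}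

lemma eq_zero_of_apply_self_eq_zero (hg : NondegenerateMax g u₀ H) {d : V} (hd : H d d = 0) :
    d = 0 := by
  by_contra hne
  exact (hg.neg_def d hne).ne hd

lemma eq_zero_of_forall_fderiv_apply_eq_zero (hg : NondegenerateMax g u₀ H) {d : V}
    (hd : ∀ u, fderiv ℝ g u d = 0) : d = 0 := by
  have hH := hg.hasFDerivAt_fderiv.clm_apply (hasFDerivAt_const d u₀)
  simp only [hd] at hH
  refine hg.eq_zero_of_apply_self_eq_zero ?_
  simpa using congr($(hH.unique (hasFDerivAt_const 0 u₀)) d)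

lemma exists_equiv_apply_eq_fderiv [FiniteDimensional ℝ V] (hg : NondegenerateMax g u₀ H) :
    ∃ (n : ℕ) (u : Fin n → V) (A : V ≃L[ℝ] (Fin n → ℝ)), ∀ v i, A v i = fderiv ℝ g (u i) v := by
  let s : Set (Module.Dual ℝ V) := Set.range fun u ↦ (fderiv ℝ g u : Module.Dual ℝ V)
  obtain ⟨ℓ, hℓ, hspan, hindep⟩ := Submodule.exists_fun_fin_finrank_span_eq ℝ s
  choose u hu using hℓ
  simp only at hu
  have hinj : Function.Injective (LinearMap.pi ℓ) := by
    refine (injective_iff_map_eq_zero _).2 fun v hv ↦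
      hg.eq_zero_of_forall_fderiv_apply_eq_zero fun a ↦ ?_
    have hle : Submodule.span ℝ (Set.range ℓ) ≤ (Module.Dual.eval ℝ V v).ker :=
      Submodule.span_le.2 (Set.range_subset_iff.2 fun i ↦ congrFun hv i)
    rw [hspan] at hle
    exact hle (Submodule.subset_span ⟨a, rfl⟩)
  have hfinrank : Module.finrank ℝ V =
      Module.finrank ℝ (Fin (Module.finrank ℝ (Submodule.span ℝ s)) → ℝ) := by
    refine (LinearMap.finrank_le_finrank_of_injective hinj).antisymm ?_
    simpa [Subspace.dual_finrank_eq] using hindep.fintype_card_le_finrank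
  refine ⟨_, u, (LinearMap.linearEquivOfInjective _ hinj hfinrank).toContinuousLinearEquiv,
    fun v i ↦ ?_⟩
  exact congr($(hu i) v).symm

lemma eventually_eq_of_fderiv_eq_zero [FiniteDimensional ℝ V] (hg : NondegenerateMax g u₀ H) :
    ∀ᶠ u in 𝓝 u₀, fderiv ℝ g u = 0 → u = u₀ := by
  have hker : H.toLinearMap.ker = ⊥ := by
    refine LinearMap.ker_eq_bot'.2 fun d hd ↦ hg.eq_zero_of_apply_self_eq_zero ?_
    exact congr($hd d)
  obtain ⟨C, -, hC⟩ := H.toLinearMap.exists_antilipschitzWith hker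
  filter_upwards [eventually_nhdsWithin_iff.1
    (hg.hasFDerivAt_fderiv.eventually_ne (c := 0) ⟨C, hC⟩)] with u hu hu0
  exact of_not_not fun hne ↦ hu hne hu0

lemma posDef_toQuadraticMap_neg (hg : NondegenerateMax g u₀ H) :
    (LinearMap.BilinMap.toQuadraticMap (-H.toBilinForm)).PosDef :=
  fun d hd ↦ neg_pos.2 (hg.neg_def d hd)

lemma comp_continuousLinearEquiv (hg : NondegenerateMax g u₀ H) (S : V' ≃L[ℝ] V) :
    NondegenerateMax (g ∘ S) (S.symm u₀)
      (H.bilinearComp (S : V' →L[ℝ] V) (S : V' →L[ℝ] V)) where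
  fderiv_eq_zero := by
    rw [S.comp_right_fderiv, S.apply_symm_apply, hg.fderiv_eq_zero, ContinuousLinearMap.zero_comp]
  hasFDerivAt_fderiv := by
    have hS : fderiv ℝ (g ∘ S) =
        ContinuousLinearMap.precomp ℝ (S : V' →L[ℝ] V) ∘ fderiv ℝ g ∘ S :=
      funext fun x ↦ S.comp_right_fderiv
    rw [hS]
    refine (ContinuousLinearMap.hasFDerivAt _).comp _ (HasFDerivAt.comp _ ?_ S.hasFDerivAt)
    simpa using hg.hasFDerivAt_fderiv
  neg_def d hd := hg.neg_def (S d) (S.map_ne_zero_iff.2 hd)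

lemma log (hg : NondegenerateMax g u₀ H) (hdiff : Differentiable ℝ g) (hpos : ∀ u, 0 < g u) :
    NondegenerateMax (fun u ↦ Real.log (g u)) u₀ ((g u₀)⁻¹ • H) where
  fderiv_eq_zero := by
    rw [fderiv.log (hdiff u₀) (hpos u₀).ne', hg.fderiv_eq_zero, smul_zero]
  hasFDerivAt_fderiv := by
    have hlog : fderiv ℝ (fun u ↦ Real.log (g u)) = g⁻¹ • fderiv ℝ g :=
      funext fun u ↦ fderiv.log (hdiff u) (hpos u).ne'
    rw [hlog]
    simpa [hg.fderiv_eq_zero] using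
      ((hdiff u₀).inv (hpos u₀).ne').hasFDerivAt.smul hg.hasFDerivAt_fderiv
  neg_def d hd := mul_neg_of_pos_of_neg (inv_pos.2 (hpos u₀)) (hg.neg_def d hd)

end NondegenerateMax

lemma LocalMaxCondition.exists_nondegenerateMax {G : ℕ} {ρ : E G → ℝ} (h : LocalMaxCondition ρ) :
    ∃ u₀ H, NondegenerateMax ρ u₀ H := by
  obtain ⟨u₀, hmax, hcont, hneg⟩ := h
  refine ⟨u₀, fderiv ℝ (fderiv ℝ ρ) u₀, hmax.fderiv_eq_zero, ?_, fun d hd ↦ ?_⟩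
  · exact ((hcont.fderiv_right one_add_one_eq_two.le).differentiableAt one_ne_zero).hasFDerivAt
  · simpa [iteratedFDeriv_two_apply] using hneg d hd

section AdditiveMatch

open Filter Topology

variable {X V : Type*} [NormedAddCommGroup X] [NormedSpace ℝ X] [NormedAddCommGroup V]
  [NormedSpace ℝ V]

lemma eq_linear_add_const_of_posDef_comp_symm_eq [FiniteDimensional ℝ V] {Q : QuadraticForm ℝ V}
    (hQ : Q.PosDef) {φ : V → V} {D : V → V ≃L[ℝ] V}
    (hφ : ∀ v, HasStrictFDerivAt φ (D v : V →L[ℝ] V) v)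
    (hD : ∀ v w e, Q ((D v).symm e) = Q ((D w).symm e)) (v : V) : φ v = D 0 v + φ 0 := by
  obtain ⟨M, hM⟩ := exists_equiv_euclideanSpace_norm_sq_eq_of_posDef hQ
  let L := fun a ↦ M.symm.trans ((D (M.symm a)).trans ((D 0).symm.trans M))
  have hL : ∀ a d, ‖L a d‖ = ‖d‖ := by
    intro a d
    rw [← sq_eq_sq₀ (norm_nonneg _) (norm_nonneg _)]
    simpa [L, hM, hD 0 (M.symm a)] using (hM (M.symm d)).symm
  have hκ : ∀ a, HasStrictFDerivAt (M ∘ (D 0).symm ∘ φ ∘ M.symm) (L a : _ →L[ℝ] _) a := fun a ↦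
    M.hasStrictFDerivAt.comp a ((D 0).symm.hasStrictFDerivAt.comp a
      ((hφ (M.symm a)).comp a M.symm.hasStrictFDerivAt))
  have hconst : ∀ v, D v = D 0 := by
    intro v
    have hv := isometry_fderiv_const (D := fun a ↦ ⟨(L a).toLinearEquiv, hL a⟩) hκ (M v) (M 0)
    ext d
    exact (D 0).symm_apply_eq.1 (by simpa [L] using congr($hv (M d)))
  have hzero : ∀ v, HasFDerivAt (fun v ↦ φ v - D 0 v) (0 : V →L[ℝ] V) v := by
    intro v
    have hsub := (hφ v).hasFDerivAt.fun_sub (D 0).hasFDerivAt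
    rwa [hconst v, sub_self] at hsub
  have heq := is_const_of_fderiv_eq_zero (fun v ↦ (hzero v).differentiableAt)
    (fun v ↦ (hzero v).fderiv) v 0
  rw [map_zero, sub_zero] at heq
  rw [← heq, add_sub_cancel]

lemma surjective_of_ker_le_ker [FiniteDimensional ℝ X] [FiniteDimensional ℝ V] {A B : X →ₗ[ℝ] V}
    (hA : Function.Surjective A) (hker : B.ker ≤ A.ker) : Function.Surjective B := by
  rw [← LinearMap.range_eq_top] at hA ⊢
  refine Submodule.eq_top_of_finrank_eq (le_antisymm (Submodule.finrank_le _) ?_)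
  have hrank := A.finrank_range_add_finrank_ker
  rw [hA, finrank_top] at hrank
  linarith [B.finrank_range_add_finrank_ker, Submodule.finrank_mono hker]

variable [MeasurableSpace X]

/-- Locally Lipschitz maps onto `V` whose derivative has full rank almost everywhere. -/
structure IsOntoSubmersion (μ : Measure X) (r : X → V) : Prop where
  locallyLipschitz : LocallyLipschitz r
  surjective : Function.Surjective r
  ae_surjective_fderiv : ∀ᵐ x ∂μ, DifferentiableAt ℝ r x ∧ Function.Surjective (fderiv ℝ r x)

/-- The functional equation satisfied by two log-densities `g` and `gt` of the same data, written
in the coordinate `v = r₀ y`, so that `φ` is `rt₀ ∘ r₀⁻¹` and `j` collects the log-Jacobians. -/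
structure AdditiveMatch (μ : Measure X) (g gt : V → ℝ) (φ : V → V) (j : V → ℝ) (r rt : X → V) :
    Prop where
  contDiff : ContDiff ℝ 1 g
  contDiff' : ContDiff ℝ 1 gt
  lip : LocallyLipschitz φ
  onto : IsOntoSubmersion μ r
  lip' : LocallyLipschitz rt
  eq : ∀ v x, g (v + r x) = gt (φ v + rt x) + j v

namespace AdditiveMatch

variable {μ : Measure X} {g gt : V → ℝ} {φ : V → V} {j : V → ℝ} {r rt : X → V} {u₀ : V}
  {H : V →L[ℝ] V →L[ℝ] ℝ}

lemma fderiv_comp_eq (h : AdditiveMatch μ g gt φ j r rt) {x : X} (hr : DifferentiableAt ℝ r x)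
    (hrt : DifferentiableAt ℝ rt x) (v : V) :
    (fderiv ℝ g (v + r x)).comp (fderiv ℝ r x) =
      (fderiv ℝ gt (φ v + rt x)).comp (fderiv ℝ rt x) := by
  have hl := (h.contDiff.differentiable one_ne_zero (v + r x)).hasFDerivAt.comp x
    (hr.hasFDerivAt.const_add v)
  have hR := ((h.contDiff'.differentiable one_ne_zero (φ v + rt x)).hasFDerivAt.comp x
    (hrt.hasFDerivAt.const_add (φ v))).add_const (j v)
  exact hl.unique (hR.congr_of_eventuallyEq (.of_forall (h.eq v)))

variable [FiniteDimensional ℝ X] [BorelSpace X] [μ.IsAddHaarMeasure] [FiniteDimensional ℝ V]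

lemma fderiv_eq_zero (h : AdditiveMatch μ g gt φ j r rt) (hg : NondegenerateMax g u₀ H) (x : X) :
    fderiv ℝ gt (φ (u₀ - r x) + rt x) = 0 := by
  have hcont : Continuous fun x ↦ fderiv ℝ gt (φ (u₀ - r x) + rt x) :=
    (h.contDiff'.continuous_fderiv one_ne_zero).comp
      ((h.lip.continuous.comp (continuous_const.sub h.onto.locallyLipschitz.continuous)).add
        h.lip'.continuous)
  have hdense := dense_setOf_and_differentiableAt h.lip' h.onto.ae_surjective_fderiv
  refine congrFun (hcont.ext_on hdense continuous_const ?_) x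
  rintro x ⟨⟨hr, hsurj⟩, hrt⟩
  have hsurj' : Function.Surjective (fderiv ℝ rt x) := by
    refine surjective_of_ker_le_ker (B := (fderiv ℝ rt x).toLinearMap) hsurj fun d hd ↦
      hg.eq_zero_of_forall_fderiv_apply_eq_zero fun u ↦ ?_
    have hd' : fderiv ℝ rt x d = 0 := hd
    simpa [hd'] using congr($(h.fderiv_comp_eq hr hrt (u - r x)) d)
  ext w
  obtain ⟨d, rfl⟩ := hsurj' w
  simpa [hg.fderiv_eq_zero] using congr($(h.fderiv_comp_eq hr hrt (u₀ - r x)) d).symm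

lemma offset_eq (h : AdditiveMatch μ g gt φ j r rt) (hg : NondegenerateMax g u₀ H) (v w : V) :
    j v = j w := by
  have hj : ∀ v, HasFDerivAt j (0 : V →L[ℝ] ℝ) v := by
    intro v
    obtain ⟨x, hx⟩ := h.onto.surjective (u₀ - v)
    have hgv : HasFDerivAt (fun v ↦ g (v + r x)) (0 : V →L[ℝ] ℝ) v := by
      have hgx := (h.contDiff.differentiable one_ne_zero (v + r x)).hasFDerivAt
      rw [hx, add_sub_cancel, hg.fderiv_eq_zero] at hgx
      rw [hasFDerivAt_comp_add_right, hx, add_sub_cancel]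
      exact hgx
    have hgtv : HasFDerivAt (fun v ↦ gt (φ v + rt x)) (0 : V →L[ℝ] ℝ) v := by
      have hgtx := (h.contDiff'.differentiable one_ne_zero (φ v + rt x)).hasFDerivAt
      have hcrit := h.fderiv_eq_zero hg x
      rw [hx, sub_sub_cancel] at hcrit
      rw [hcrit, ← hasFDerivAt_comp_add_right] at hgtx
      exact hasFDerivAt_zero_comp_of_isBigO (isBigO_sub_of_locallyLipschitz h.lip v) hgtx
    simpa [h.eq] using hgv.fun_sub hgtv
  exact is_const_of_fderiv_eq_zero (fun v ↦ (hj v).differentiableAt) (fun v ↦ (hj v).fderiv) v w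

lemma exists_hasStrictFDerivAt (h : AdditiveMatch μ g gt φ j r rt) (hg : NondegenerateMax g u₀ H)
    (v : V) : ∃ D : V ≃L[ℝ] V, HasStrictFDerivAt φ (D : V →L[ℝ] V) v := by
  obtain ⟨n, u, A, hA⟩ := hg.exists_equiv_apply_eq_fderiv
  choose x hx using fun i ↦ h.onto.surjective (u i - v)
  have hΓ : HasStrictFDerivAt (fun v' i ↦ g (v' + r (x i))) (A : V →L[ℝ] (Fin n → ℝ)) v := by
    refine hasStrictFDerivAt_pi'.2 fun i ↦ ?_
    have hgi := (h.contDiff.contDiffAt.hasStrictFDerivAt one_ne_zero (x := v + r (x i))).comp v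
      ((hasStrictFDerivAt_id v).add_const (r (x i)))
    refine hgi.congr_fderiv ?_
    ext d
    simp [hx, hA]
  have hΓt : HasStrictFDerivAt (fun w i ↦ gt (w + rt (x i)) + j v)
      (ContinuousLinearMap.pi fun i ↦ fderiv ℝ gt (φ v + rt (x i))) (φ v) := by
    refine hasStrictFDerivAt_pi.2 fun i ↦ ?_
    have hgti := (h.contDiff'.contDiffAt.hasStrictFDerivAt one_ne_zero
      (x := φ v + rt (x i))).comp (φ v) ((hasStrictFDerivAt_id (φ v)).add_const (rt (x i)))
    exact hgti.add_const (j v)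
  refine exists_hasStrictFDerivAt_of_comp_eq (isBigO_sub_of_locallyLipschitz h.lip v)
    h.lip.continuous.continuousAt hΓ hΓt fun w ↦ ?_
  ext i
  rw [h.eq, h.offset_eq hg w v]

lemma fderiv_comp_eq_fderiv (h : AdditiveMatch μ g gt φ j r rt) (hg : NondegenerateMax g u₀ H)
    {v : V} {D : V →L[ℝ] V} (hφ : HasFDerivAt φ D v) (x : X) :
    (fderiv ℝ gt (φ v + rt x)).comp D = fderiv ℝ g (v + r x) := by
  have hl := (h.contDiff.differentiable one_ne_zero (v + r x)).hasFDerivAt.comp v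
    ((hasFDerivAt_id v).add_const (r x))
  have hR := ((h.contDiff'.differentiable one_ne_zero (φ v + rt x)).hasFDerivAt.comp v
    (hφ.add_const (rt x))).add_const (j v)
  refine hR.unique (hl.congr_of_eventuallyEq (.of_forall fun w ↦ ?_))
  simp [h.eq, h.offset_eq hg w v]

lemma eventually_eq_of_fderiv_eq_zero (h : AdditiveMatch μ g gt φ j r rt)
    (hg : NondegenerateMax g u₀ H) (x : X) :
    ∀ᶠ w in 𝓝 (φ (u₀ - r x) + rt x), fderiv ℝ gt w = 0 → w = φ (u₀ - r x) + rt x := by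
  choose D hD using h.exists_hasStrictFDerivAt hg
  rw [← ((hD (u₀ - r x)).add_const (rt x)).map_nhds_eq_of_equiv, eventually_map]
  have hcont : Tendsto (· + r x) (𝓝 (u₀ - r x)) (𝓝 u₀) :=
    (continuous_add_const (r x)).tendsto' _ _ (sub_add_cancel _ _)
  filter_upwards [hcont.eventually hg.eventually_eq_of_fderiv_eq_zero] with v hv hcrit
  have hgv := h.fderiv_comp_eq_fderiv hg (hD v).hasFDerivAt x
  rw [hcrit, ContinuousLinearMap.zero_comp] at hgv
  rw [eq_sub_of_add_eq (hv hgv.symm)]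

lemma exists_forall_add_eq (h : AdditiveMatch μ g gt φ j r rt) (hg : NondegenerateMax g u₀ H) :
    ∃ ut, ∀ x, φ (u₀ - r x) + rt x = ut := by
  have hcont : Continuous fun x ↦ φ (u₀ - r x) + rt x :=
    (h.lip.continuous.comp (continuous_const.sub h.onto.locallyLipschitz.continuous)).add
      h.lip'.continuous
  have hconst : IsLocallyConstant fun x ↦ φ (u₀ - r x) + rt x := by
    refine (IsLocallyConstant.iff_eventually_eq _).2 fun x ↦ ?_
    filter_upwards [hcont.continuousAt.eventually (h.eventually_eq_of_fderiv_eq_zero hg x)]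
      with x' hx' using hx' (h.fderiv_eq_zero hg x')
  exact ⟨_, fun x ↦ hconst.apply_eq_of_preconnectedSpace x 0⟩

lemma fderiv_comp_eq_fderiv_sub (h : AdditiveMatch μ g gt φ j r rt)
    (hg : NondegenerateMax g u₀ H) {ut : V} (hut : ∀ x, φ (u₀ - r x) + rt x = ut) {v : V}
    {D : V →L[ℝ] V} (hφ : HasFDerivAt φ D v) (w : V) :
    (fderiv ℝ gt (ut + (φ v - φ w))).comp D = fderiv ℝ g (u₀ + (v - w)) := by
  obtain ⟨x, hx⟩ := h.onto.surjective (u₀ - w)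
  have hw := hut x
  rw [hx, sub_sub_cancel] at hw
  have htgt : ut + (φ v - φ w) = φ v + rt x := by
    rw [← hw]
    abel
  have hsrc : u₀ + (v - w) = v + r x := by
    rw [hx]
    abel
  rw [htgt, hsrc, h.fderiv_comp_eq_fderiv hg hφ]

lemma hasFDerivAt_fderiv_add (h : AdditiveMatch μ g gt φ j r rt) (hg : NondegenerateMax g u₀ H)
    {ut : V} (hut : ∀ x, φ (u₀ - r x) + rt x = ut) {v : V} {D : V ≃L[ℝ] V}
    (hφ : HasStrictFDerivAt φ (D : V →L[ℝ] V) v) :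
    HasFDerivAt (fun e ↦ fderiv ℝ gt (ut + e))
      (H.bilinearComp (D.symm : V →L[ℝ] V) (D.symm : V →L[ℝ] V)) 0 := by
  let θ : V → V := hφ.localInverse φ D v
  have hsub : Tendsto (φ v - ·) (𝓝 0) (𝓝 (φ v)) :=
    (continuous_const.sub continuous_id).tendsto' _ _ (sub_zero _)
  have hθ : HasFDerivAt (fun e ↦ u₀ + (v - θ (φ v - e))) (D.symm : V →L[ℝ] V) 0 := by
    have hinv : HasFDerivAt θ (D.symm : V →L[ℝ] V) (φ v - 0) := by
      simpa using hφ.to_localInverse.hasFDerivAt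
    simpa using ((hinv.comp 0 ((hasFDerivAt_id (𝕜 := ℝ) (0 : V)).const_sub (φ v))).const_sub
      v).const_add u₀
  have hθ₀ : u₀ + (v - θ (φ v - 0)) = u₀ := by simp [θ]
  have hcomp := (ContinuousLinearMap.precomp ℝ (D.symm : V →L[ℝ] V)).hasFDerivAt.comp 0
    (HasFDerivAt.comp 0 (hθ₀.symm ▸ hg.hasFDerivAt_fderiv) hθ)
  refine hcomp.congr_of_eventuallyEq ?_
  filter_upwards [hsub.eventually hφ.eventually_right_inverse] with e he
  have hfd := h.fderiv_comp_eq_fderiv_sub hg hut hφ.hasFDerivAt (θ (φ v - e))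
  rw [he, sub_sub_cancel] at hfd
  ext d
  simpa using congr($hfd (D.symm d))

theorem exists_affine (h : AdditiveMatch μ g gt φ j r rt) (hg : NondegenerateMax g u₀ H) :
    ∃ (A : V ≃L[ℝ] V) (c : V) (j₀ : ℝ),
      (∀ v x, φ v + rt x = A (v + r x) + c) ∧ ∀ u, g u = gt (A u + c) + j₀ := by
  choose D hD using h.exists_hasStrictFDerivAt hg
  obtain ⟨ut, hut⟩ := h.exists_forall_add_eq hg
  have hφ : ∀ v, φ v = D 0 v + φ 0 := by
    -- The Hessian of `gt` at `ut` is the pullback of `H` by `(D v)⁻¹`, whatever `v` is.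
    refine eq_linear_add_const_of_posDef_comp_symm_eq hg.posDef_toQuadraticMap_neg hD
      fun v w e ↦ ?_
    have heq := (h.hasFDerivAt_fderiv_add hg hut (hD v)).unique
      (h.hasFDerivAt_fderiv_add hg hut (hD w))
    simpa using congr($heq e e)
  have hrt : ∀ v x, φ v + rt x = D 0 (v + r x) + (ut - D 0 u₀) := by
    intro v x
    rw [← hut x, hφ v, hφ (u₀ - r x), map_add, map_sub]
    abel
  refine ⟨D 0, ut - D 0 u₀, j 0, hrt, fun u ↦ ?_⟩
  obtain ⟨x, hx⟩ := h.onto.surjective u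
  rw [← hx, ← zero_add (r x), ← hrt, h.eq]

end AdditiveMatch

end AdditiveMatch

section MulVecE

variable {m n : ℕ}

lemma mulVecE_apply (A : Matrix (Fin m) (Fin n) ℝ) (x : E n) (i : Fin m) :
    mulVecE A x i = ∑ k, A i k * x k :=
  rfl

lemma mulVecE_mul {l : ℕ} (A : Matrix (Fin l) (Fin m) ℝ) (B : Matrix (Fin m) (Fin n) ℝ)
    (x : E n) : mulVecE (A * B) x = mulVecE A (mulVecE B x) := by
  simp [mulVecE]

lemma mulVecE_one (x : E n) : mulVecE (1 : Matrix (Fin n) (Fin n) ℝ) x = x := by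
  simp [mulVecE]

lemma mulVecE_add (A : Matrix (Fin m) (Fin n) ℝ) (x y : E n) :
    mulVecE A (x + y) = mulVecE A x + mulVecE A y := by
  simp [mulVecE, Matrix.mulVec_add]

lemma mulVecE_zero (A : Matrix (Fin m) (Fin n) ℝ) : mulVecE A 0 = 0 := by
  simp [mulVecE]

variable {A B : Matrix (Fin n) (Fin n) ℝ}

lemma mulVecE_inv_mulVecE (hA : A.det ≠ 0) (x : E n) : mulVecE A⁻¹ (mulVecE A x) = x := by
  rw [← mulVecE_mul, A.nonsing_inv_mul hA.isUnit, mulVecE_one]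

lemma mulVecE_mulVecE_inv (hA : A.det ≠ 0) (x : E n) : mulVecE A (mulVecE A⁻¹ x) = x := by
  rw [← mulVecE_mul, A.mul_nonsing_inv hA.isUnit, mulVecE_one]

lemma mulVecE_left_injective (h : ∀ x, mulVecE A x = mulVecE B x) : A = B :=
  (Matrix.toEuclideanCLM (𝕜 := ℝ)).injective (ContinuousLinearMap.ext h)

lemma exists_equiv_eq_mulVecE (hA : A.det ≠ 0) : ∃ S : E n ≃L[ℝ] E n, ⇑S = mulVecE A :=
  ⟨.equivOfInverse (Matrix.toEuclideanCLM (𝕜 := ℝ) A) (Matrix.toEuclideanCLM (𝕜 := ℝ) A⁻¹)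
    (mulVecE_inv_mulVecE hA) (mulVecE_mulVecE_inv hA), rfl⟩

lemma contDiff_mulVecE {k : WithTop ℕ∞} : ContDiff ℝ k (mulVecE A) :=
  (Matrix.toEuclideanCLM (𝕜 := ℝ) A).contDiff

lemma det_toEuclideanCLM (A : Matrix (Fin n) (Fin n) ℝ) :
    (Matrix.toEuclideanCLM (𝕜 := ℝ) A).det = A.det :=
  LinearMap.det_toLin (EuclideanSpace.basisFun (Fin n) ℝ).toBasis A

lemma det_fderiv_of_add_eq_mulVecE {r rt : E n → E n} {b bt : E n}
    (h : ∀ y, rt y + bt = mulVecE A (r y + b)) {y : E n} (hr : DifferentiableAt ℝ r y) :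
    (fderiv ℝ rt y).det = A.det * (fderiv ℝ r y).det := by
  have hrt : HasFDerivAt rt ((Matrix.toEuclideanCLM (𝕜 := ℝ) A).comp (fderiv ℝ r y)) y := by
    have hcomp := ((Matrix.toEuclideanCLM (𝕜 := ℝ) A).hasFDerivAt.comp y
      (hr.hasFDerivAt.add_const b)).sub_const bt
    exact hcomp.congr_of_eventuallyEq (.of_forall fun y ↦ eq_sub_of_add_eq (h y))
  rw [hrt.fderiv, ← det_toEuclideanCLM]
  exact LinearMap.det_comp _ _

lemma eq_of_add_eq_mulVecE {r rt : E n → E n} (hr : Function.Surjective r) {a b at' bt : E n}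
    (hA : ∀ y, rt y + at' = mulVecE A (r y + a)) (hB : ∀ y, rt y + bt = mulVecE B (r y + b)) :
    A = B := by
  obtain ⟨y₀, hy₀⟩ := hr 0
  have hsub : ∀ {C : Matrix (Fin n) (Fin n) ℝ} {c ct : E n},
      (∀ y, rt y + ct = mulVecE C (r y + c)) → ∀ y, mulVecE C (r y) = rt y - rt y₀ := by
    intro C c ct hC y
    rw [← add_sub_add_right_eq_sub _ _ ct, hC, hC, hy₀, zero_add, mulVecE_add, add_sub_cancel_right]
  refine mulVecE_left_injective fun v ↦ ?_
  obtain ⟨y, rfl⟩ := hr v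
  rw [hsub hA, hsub hB]

lemma integral_comp_mulVecE_add (hA : A.det ≠ 0) (d : E n) (h : E n → ℝ) :
    |A.det| * ∫ u, h (mulVecE A u + d) = ∫ u, h u := by
  obtain ⟨S, hS⟩ := exists_equiv_eq_mulVecE hA
  have hmap : Measure.map (mulVecE A) volume =
      ENNReal.ofReal |A.det⁻¹| • (volume : Measure (E n)) := by
    have hdet : LinearMap.det (Matrix.toEuclideanCLM (𝕜 := ℝ) A).toLinearMap = A.det :=
      det_toEuclideanCLM A
    exact hdet ▸ Measure.map_linearMap_addHaar_eq_smul_addHaar volume (hdet.symm ▸ hA)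
  have hint := S.toHomeomorph.measurableEmbedding.integral_map (μ := volume) fun u ↦ h (u + d)
  simp only [ContinuousLinearEquiv.coe_toHomeomorph, hS] at hint
  rw [← hint, hmap, integral_smul_measure, integral_add_right_eq_self,
    ENNReal.toReal_ofReal (abs_nonneg _), smul_eq_mul, abs_inv,
    mul_inv_cancel_left₀ (abs_ne_zero.2 hA)]

end MulVecE

section PosDef

variable {ι : Type*} {A B : Matrix ι ι ℝ}

lemma posDef_of_isDiag (hA : A.IsDiag) (hpos : ∀ i, 0 < A i i) : A.PosDef := by
  classical
  rw [← hA.diagonal_diag]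
  exact .diagonal hpos

variable [Fintype ι]

lemma isDiag_mul (hA : A.IsDiag) (hB : B.IsDiag) : (A * B).IsDiag := by
  classical
  rw [← hA.diagonal_diag, ← hB.diagonal_diag, diagonal_mul_diagonal]
  exact isDiag_diagonal _

lemma posDef_mul_mul_transpose [DecidableEq ι] {Q : Matrix ι ι ℝ} (hQ : Q * Qᵀ = 1)
    (hA : A.PosDef) : (Q * A * Qᵀ).PosDef :=
  (Matrix.IsUnit.posDef_star_right_conjugate_iff (.of_mul_eq_one _ hQ)).2 hA

open scoped MatrixOrder in
lemma mul_self_eq_mul_self_iff_of_posDef (hA : A.PosDef) (hB : B.PosDef) :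
    A * A = B * B ↔ A = B := by
  classical
  exact CFC.mul_self_eq_mul_self_iff A B hA.posSemidef.nonneg hB.posSemidef.nonneg

lemma posDef_mul_self (hA : A.PosDef) : (A * A).PosDef := by
  classical
  simpa only [star_eq_conjTranspose, hA.isHermitian.eq, mul_one] using
    (Matrix.IsUnit.posDef_star_right_conjugate_iff hA.isUnit).2 (PosDef.one (R := ℝ) (n := ι))

end PosDef

namespace AdmissibleDensity

variable {m n : ℕ} {f ft : E n → ℝ}

lemma integrable (hf : AdmissibleDensity f) : Integrable f :=
  .of_integral_ne_zero (hf.2.2.1.trans_ne one_ne_zero)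

lemma integrable_mul_self_mul (hf : AdmissibleDensity f) (i : Fin n) :
    Integrable fun u : E n ↦ u i * u i * f u :=
  .of_integral_ne_zero (by simp [hf.2.2.2.2])

lemma integrable_coord_mul (hf : AdmissibleDensity f) (i : Fin n) :
    Integrable fun u : E n ↦ u i * f u := by
  have hcont := hf.1.continuous
  refine (hf.integrable.add (hf.integrable_mul_self_mul i)).mono' (by fun_prop)
    (.of_forall fun u ↦ ?_)
  have habs : |u i| ≤ 1 + u i * u i := by
    rw [← abs_mul_abs_self (u i)]
    nlinarith [sq_nonneg (|u i| - 1)]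
  calc ‖u i * f u‖ = |u i| * f u := by rw [Real.norm_eq_abs, abs_mul, abs_of_pos (hf.2.1 u)]
    _ ≤ (1 + u i * u i) * f u := mul_le_mul_of_nonneg_right habs (hf.2.1 u).le
    _ = f u + u i * u i * f u := by ring

lemma integrable_coord_mul_coord_mul (hf : AdmissibleDensity f) (i j : Fin n) :
    Integrable fun u : E n ↦ u i * u j * f u := by
  have hcont := hf.1.continuous
  refine ((hf.integrable_mul_self_mul i).add (hf.integrable_mul_self_mul j)).mono' (by fun_prop)
    (.of_forall fun u ↦ ?_)
  have habs : |u i * u j| ≤ u i * u i + u j * u j := by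
    rw [abs_le]
    constructor <;> nlinarith [sq_nonneg (u i + u j), sq_nonneg (u i - u j)]
  calc ‖u i * u j * f u‖ = |u i * u j| * f u := by
        rw [Real.norm_eq_abs, abs_mul, abs_of_pos (hf.2.1 u)]
    _ ≤ (u i * u i + u j * u j) * f u := mul_le_mul_of_nonneg_right habs (hf.2.1 u).le
    _ = u i * u i * f u + u j * u j * f u := add_mul _ _ _

lemma integral_mulVecE_add_mul (hf : AdmissibleDensity f) (B : Matrix (Fin m) (Fin n) ℝ)
    (d : E m) (i : Fin m) : ∫ u, (mulVecE B u + d) i * f u = d i := by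
  have hexpand (u : E n) :
      (mulVecE B u + d) i * f u = (∑ k, B i k * (u k * f u)) + d i * f u := by
    simp only [PiLp.add_apply, mulVecE_apply, add_mul, Finset.sum_mul, mul_assoc]
  have hint (k : Fin n) : Integrable fun u : E n ↦ B i k * (u k * f u) :=
    (hf.integrable_coord_mul k).const_mul _
  simp only [hexpand]
  rw [integral_add (integrable_finsetSum _ fun k _ ↦ hint k) (hf.integrable.const_mul _),
    integral_finsetSum _ fun k _ ↦ hint k]
  simp [integral_const_mul, hf.2.2.1, hf.2.2.2.1]

lemma integral_mulVecE_mul_mulVecE_mul (hf : AdmissibleDensity f)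
    (B : Matrix (Fin m) (Fin n) ℝ) (i j : Fin m) :
    ∫ u, mulVecE B u i * mulVecE B u j * f u = (B * Bᵀ) i j := by
  have hexpand (u : E n) : mulVecE B u i * mulVecE B u j * f u =
      ∑ k, ∑ l, B i k * B j l * (u k * u l * f u) := by
    rw [mulVecE_apply, mulVecE_apply, Finset.sum_mul_sum]
    simp only [Finset.sum_mul]
    exact Finset.sum_congr rfl fun k _ ↦ Finset.sum_congr rfl fun l _ ↦ by ring
  have hint (k l : Fin n) : Integrable fun u : E n ↦ B i k * B j l * (u k * u l * f u) :=
    (hf.integrable_coord_mul_coord_mul k l).const_mul _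
  simp only [hexpand]
  rw [integral_finsetSum _ fun k _ ↦ integrable_finsetSum _ fun l _ ↦ hint k l]
  simp [integral_finsetSum _ fun l _ ↦ hint _ l, integral_const_mul, hf.2.2.2.2, mul_apply]

theorem eq_zero_and_mul_transpose_eq_one (hf : AdmissibleDensity f)
    (hft : AdmissibleDensity ft) {B : Matrix (Fin n) (Fin n) ℝ} (hB : B.det ≠ 0) {d : E n} {κ : ℝ}
    (h : ∀ u, ft (mulVecE B u + d) = κ * f u) : d = 0 ∧ B * Bᵀ = 1 := by
  have hκ : |B.det| * κ = 1 := by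
    simpa only [h, integral_const_mul, hf.2.2.1, hft.2.2.1, mul_one]
      using integral_comp_mulVecE_add hB d ft
  have hmoment (q : E n → ℝ) : ∫ u, q u * ft u = ∫ u, q (mulVecE B u + d) * f u := by
    rw [← integral_comp_mulVecE_add hB d]
    simp only [h, mul_left_comm _ κ]
    rw [integral_const_mul, ← mul_assoc, hκ, one_mul]
  have hd : d = 0 := by
    ext i
    rw [← hf.integral_mulVecE_add_mul B d i, ← hmoment fun u ↦ u i, hft.2.2.2.1, PiLp.zero_apply]
  refine ⟨hd, ?_⟩
  subst hd
  simp only [add_zero] at hmoment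
  ext i j
  rw [← hf.integral_mulVecE_mul_mulVecE_mul B i j, ← hmoment fun u ↦ u i * u j, hft.2.2.2.2,
    one_apply]

theorem comp_mulVecE_transpose (hf : AdmissibleDensity f) {Q : Matrix (Fin n) (Fin n) ℝ}
    (hQ : Q * Qᵀ = 1) : AdmissibleDensity fun u ↦ f (mulVecE Qᵀ u) := by
  have hdet : Q.det * Q.det = 1 := by
    simpa only [det_mul, det_transpose, det_one] using congrArg det hQ
  have hmoment (q : E n → ℝ) : ∫ u, q u * f (mulVecE Qᵀ u) = ∫ u, q (mulVecE Q u) * f u := by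
    rw [← integral_comp_mulVecE_add (left_ne_zero_of_mul_eq_one hdet) 0,
      abs_eq_abs.2 (mul_self_eq_one_iff.1 hdet), abs_one, one_mul]
    simp only [add_zero, ← mulVecE_mul, mul_eq_one_comm.1 hQ, mulVecE_one]
  refine ⟨hf.1.comp contDiff_mulVecE, fun u ↦ hf.2.1 _, ?_, fun i ↦ ?_, fun i j ↦ ?_⟩
  · simpa only [one_mul, hf.2.2.1] using hmoment fun _ ↦ 1
  · simpa only [add_zero, PiLp.zero_apply, ← hmoment fun u ↦ u i]
      using hf.integral_mulVecE_add_mul Q 0 i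
  · rw [hmoment fun u ↦ u i * u j, hf.integral_mulVecE_mul_mulVecE_mul, hQ, one_apply]

end AdmissibleDensity

section ObservationalEquivalence

open Filter Topology

lemma forall_eq_of_ae_exists_ae_eq {Y X W : Type*} [TopologicalSpace Y] [MeasurableSpace Y]
    [TopologicalSpace X] [MeasurableSpace X] [TopologicalSpace W] [T2Space W] {μ : Measure Y}
    {ν : Measure X} [μ.IsOpenPosMeasure] [ν.IsOpenPosMeasure] {F : Y → X → W}
    (hleft : ∀ x, Continuous fun y ↦ F y x) (hright : ∀ y, Continuous (F y))
    (h : ∀ᵐ y ∂μ, ∃ c, ∀ᵐ x ∂ν, F y x = c) (y : Y) (x x' : X) : F y x = F y x' := by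
  have hae : ∀ᵐ y ∂μ, F y x = F y x' := by
    filter_upwards [h] with y ⟨c, hc⟩
    have hconst := ((hright y).ae_eq_iff_eq ν continuous_const).1 hc
    rw [hconst]
  exact congrFun (((hleft x).ae_eq_iff_eq μ (hleft x')).1 hae) y

variable {n : ℕ}

/-- The density of `y` in the model `r₀ y + b = S u`, where `u` has density `f`. -/
def semDensity (f : E n → ℝ) (S : Matrix (Fin n) (Fin n) ℝ) (r₀ : E n → E n) (b y : E n) : ℝ :=
  f (mulVecE S⁻¹ (r₀ y + b)) * (S⁻¹.det * (fderiv ℝ r₀ y).det)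

/-- The logarithm of the factor of `semDensity` that involves `f`, as a function of
`s = r₀ y + b`. -/
def logScaledDensity (f : E n → ℝ) (S : Matrix (Fin n) (Fin n) ℝ) (s : E n) : ℝ :=
  Real.log (f (mulVecE S⁻¹ s))

/-- Maps whose derivative exists and has positive determinant almost everywhere, the condition
under which `semDensity` is a positive change-of-variables density. -/
def AEOrientationPreserving (r₀ : E n → E n) : Prop :=
  ∀ᵐ y, DifferentiableAt ℝ r₀ y ∧ 0 < (fderiv ℝ r₀ y).det

variable {X : Type*} [MeasurableSpace X] {μ : Measure X} {f ft : E n → ℝ}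
  {S St A : Matrix (Fin n) (Fin n) ℝ} {b bt : X → E n}

/-- Observational equivalence at a fixed value of the conditioning variable: the two models give
`y` the same conditional density for almost every value of `(y, x)`. -/
def ObsEquiv (μ : Measure X) (f ft : E n → ℝ) (S St : Matrix (Fin n) (Fin n) ℝ)
    (r₀ rt₀ : E n → E n) (b bt : X → E n) : Prop :=
  ∀ᵐ w ∂(volume.prod μ), semDensity f S r₀ (b w.2) w.1 = semDensity ft St rt₀ (bt w.2) w.1

lemma det_inv_pos (hS : 0 < S.det) : 0 < S⁻¹.det := by
  rw [det_nonsing_inv, Ring.inverse_eq_inv']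
  exact inv_pos.2 hS

lemma log_semDensity {r₀ : E n → E n} {y b : E n} (hf : ∀ u, 0 < f u) (hS : 0 < S.det)
    (hr₀ : 0 < (fderiv ℝ r₀ y).det) :
    Real.log (semDensity f S r₀ b y) =
      logScaledDensity f S (r₀ y + b) + Real.log (S⁻¹.det * (fderiv ℝ r₀ y).det) :=
  Real.log_mul (hf _).ne' (mul_pos (det_inv_pos hS) hr₀).ne'

lemma AdmissibleDensity.contDiff_logScaledDensity (hf : AdmissibleDensity f) :
    ContDiff ℝ 1 (logScaledDensity f S) :=
  (hf.1.comp contDiff_mulVecE).log fun _ ↦ (hf.2.1 _).ne'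

lemma AdmissibleDensity.exists_nondegenerateMax_logScaledDensity (hf : AdmissibleDensity f)
    {u₀ : E n} {H : E n →L[ℝ] E n →L[ℝ] ℝ} (hmax : NondegenerateMax f u₀ H) (hS : 0 < S.det) :
    ∃ u₁ H₁, NondegenerateMax (logScaledDensity f S) u₁ H₁ := by
  obtain ⟨T, hT⟩ := exists_equiv_eq_mulVecE (det_inv_pos hS).ne'
  have hlog := (hmax.log (hf.1.differentiable one_ne_zero) hf.2.1).comp_continuousLinearEquiv T
  rw [hT] at hlog
  exact ⟨_, _, hlog⟩

lemma AdmissibleDensity.eq_zero_and_conj_eq (hf : AdmissibleDensity f) (hft : AdmissibleDensity ft)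
    (hS : S.det ≠ 0) (hSt : St.det ≠ 0) (hA : A.det ≠ 0) {c : E n} {κ : ℝ}
    (h : ∀ s, ft (mulVecE St⁻¹ (mulVecE A s + c)) = κ * f (mulVecE S⁻¹ s)) :
    c = 0 ∧ A * (S * Sᵀ) * Aᵀ = St * Stᵀ := by
  have hSt' : St * St⁻¹ = 1 := St.mul_nonsing_inv hSt.isUnit
  have hB : (St⁻¹ * A * S).det ≠ 0 := by
    rw [det_mul, det_mul]
    exact mul_ne_zero (mul_ne_zero ((isUnit_nonsing_inv_det _ hSt.isUnit).ne_zero) hA) hS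
  have haff (u : E n) : ft (mulVecE (St⁻¹ * A * S) u + mulVecE St⁻¹ c) = κ * f u := by
    rw [mulVecE_mul, mulVecE_mul, ← mulVecE_add, h, mulVecE_inv_mulVecE hS]
  obtain ⟨hc, hBB⟩ := hf.eq_zero_and_mul_transpose_eq_one hft hB haff
  constructor
  · rw [← mulVecE_mulVecE_inv hSt c, hc, mulVecE_zero]
  · calc A * (S * Sᵀ) * Aᵀ = St * St⁻¹ * (A * (S * Sᵀ) * Aᵀ) * (St * St⁻¹)ᵀ := by
          rw [hSt', transpose_one, one_mul, mul_one]
      _ = St * (St⁻¹ * A * S * (St⁻¹ * A * S)ᵀ) * Stᵀ := by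
          simp only [transpose_mul, mul_assoc]
      _ = St * Stᵀ := by rw [hBB, mul_one]

lemma semDensity_conj_eq_of_add_eq_mulVecE {Q : Matrix (Fin n) (Fin n) ℝ} (hQ : Q * Qᵀ = 1)
    (hdet : Q.det = 1) {r₀ rt₀ : E n → E n} {b bt : E n}
    (h : ∀ y, rt₀ y + bt = mulVecE Q (r₀ y + b)) {y : E n} (hr₀ : DifferentiableAt ℝ r₀ y) :
    semDensity f S r₀ b y =
      semDensity (fun u ↦ f (mulVecE Qᵀ u)) (Q * S * Qᵀ) rt₀ bt y := by
  have hQ' : Qᵀ * Q = 1 := mul_eq_one_comm.1 hQ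
  have hinv : (Q * S * Qᵀ)⁻¹ = Q * S⁻¹ * Qᵀ := by
    rw [Matrix.mul_inv_rev, Matrix.mul_inv_rev, inv_eq_left_inv hQ, inv_eq_left_inv hQ', mul_assoc]
  have hcancel : Qᵀ * (Q * S⁻¹ * Qᵀ) * Q = S⁻¹ := by
    rw [mul_assoc Q, ← mul_assoc, hQ', one_mul, mul_assoc, hQ', mul_one]
  rw [semDensity, semDensity, det_fderiv_of_add_eq_mulVecE h hr₀, h, hinv, ← mulVecE_mul,
    ← mulVecE_mul, hcancel, det_mul, det_mul, det_transpose, hdet]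
  simp only [one_mul, mul_one]

namespace ObsEquiv

lemma of_add_eq_mulVecE {r₀ rt₀ : E n → E n} [SFinite μ] {Q : Matrix (Fin n) (Fin n) ℝ}
    (hQ : Q * Qᵀ = 1) (hdet : Q.det = 1) (hr₀ : AEOrientationPreserving r₀)
    (h : ∀ y x, rt₀ y + bt x = mulVecE Q (r₀ y + b x)) :
    ObsEquiv μ f (fun u ↦ f (mulVecE Qᵀ u)) S (Q * S * Qᵀ) r₀ rt₀ b bt := by
  filter_upwards [Measure.quasiMeasurePreserving_fst.ae hr₀] with w hw
  exact semDensity_conj_eq_of_add_eq_mulVecE hQ hdet (h · w.2) hw.1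

lemma exists_forall_logScaledDensity_eq [TopologicalSpace X] [Nonempty X] [SFinite μ]
    [μ.IsOpenPosMeasure] {r₀ rt₀ : E n → E n} (h : ObsEquiv μ f ft S St r₀ rt₀ b bt)
    (hf : AdmissibleDensity f) (hft : AdmissibleDensity ft) (hS : 0 < S.det) (hSt : 0 < St.det)
    (hr₀ : AEOrientationPreserving r₀) (hrt₀ : AEOrientationPreserving rt₀)
    (hr₀' : Continuous r₀) (hrt₀' : Continuous rt₀) (hb : Continuous b) (hbt : Continuous bt) :
    ∃ j : E n → ℝ, ∀ y x, logScaledDensity f S (r₀ y + b x) =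
      logScaledDensity ft St (rt₀ y + bt x) + j y := by
  let F (y : E n) (x : X) : ℝ :=
    logScaledDensity f S (r₀ y + b x) - logScaledDensity ft St (rt₀ y + bt x)
  have hcont := hf.contDiff_logScaledDensity (S := S) |>.continuous
  have hcont' := hft.contDiff_logScaledDensity (S := St) |>.continuous
  have hconst : ∀ᵐ y, ∃ c, ∀ᵐ x ∂μ, F y x = c := by
    filter_upwards [Measure.ae_ae_of_ae_prod h, hr₀, hrt₀] with y hy hdet hdet'
    refine ⟨Real.log (St⁻¹.det * (fderiv ℝ rt₀ y).det) - Real.log (S⁻¹.det * (fderiv ℝ r₀ y).det),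
      hy.mono fun x hx ↦ ?_⟩
    have hlog := congrArg Real.log hx
    rw [log_semDensity hf.2.1 hS hdet.2, log_semDensity hft.2.1 hSt hdet'.2] at hlog
    linarith
  obtain ⟨x₀⟩ := ‹Nonempty X›
  refine ⟨fun y ↦ F y x₀, fun y x ↦ ?_⟩
  have hF : F y x = F y x₀ :=
    forall_eq_of_ae_exists_ae_eq (by fun_prop) (by fun_prop) hconst y x x₀
  exact sub_eq_iff_eq_add'.1 hF

variable [NormedAddCommGroup X] [NormedSpace ℝ X] [FiniteDimensional ℝ X] [μ.IsAddHaarMeasure]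
  {r₀ : E n ≃ₜ E n} {rt₀ : E n → E n}

lemma exists_additiveMatch (h : ObsEquiv μ f ft S St r₀ rt₀ b bt)
    (hf : AdmissibleDensity f) (hft : AdmissibleDensity ft) (hS : 0 < S.det) (hSt : 0 < St.det)
    (hr₀ : AEOrientationPreserving r₀) (hr₀symm : LocallyLipschitz r₀.symm)
    (hrt₀ : AEOrientationPreserving rt₀) (hrt₀lip : LocallyLipschitz rt₀)
    (hb : IsOntoSubmersion μ b) (hbt : LocallyLipschitz bt) :
    ∃ j, AdditiveMatch μ (logScaledDensity f S) (logScaledDensity ft St) (rt₀ ∘ r₀.symm) j b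
      bt := by
  obtain ⟨j, hj⟩ := h.exists_forall_logScaledDensity_eq hf hft hS hSt hr₀ hrt₀
    r₀.continuous hrt₀lip.continuous hb.locallyLipschitz.continuous hbt.continuous
  refine ⟨j ∘ r₀.symm, hf.contDiff_logScaledDensity, hft.contDiff_logScaledDensity,
    hrt₀lip.comp hr₀symm, hb, hbt, fun v x ↦ ?_⟩
  simpa only [Function.comp, r₀.apply_symm_apply] using hj (r₀.symm v) x

theorem exists_mulVecE [BorelSpace X] (h : ObsEquiv μ f ft S St r₀ rt₀ b bt)
    (hf : AdmissibleDensity f) {u₀ : E n} {H : E n →L[ℝ] E n →L[ℝ] ℝ}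
    (hmax : NondegenerateMax f u₀ H) (hft : AdmissibleDensity ft) (hS : 0 < S.det)
    (hSt : 0 < St.det) (hr₀ : AEOrientationPreserving r₀) (hr₀symm : LocallyLipschitz r₀.symm)
    (hrt₀ : AEOrientationPreserving rt₀) (hrt₀lip : LocallyLipschitz rt₀)
    (hb : IsOntoSubmersion μ b) (hbt : LocallyLipschitz bt) :
    ∃ A : Matrix (Fin n) (Fin n) ℝ, 0 < A.det ∧
      (∀ y x, rt₀ y + bt x = mulVecE A (r₀ y + b x)) ∧ A * (S * Sᵀ) * Aᵀ = St * Stᵀ := by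
  obtain ⟨j, hmatch⟩ :=
    h.exists_additiveMatch hf hft hS hSt hr₀ hr₀symm hrt₀ hrt₀lip hb hbt
  obtain ⟨u₁, H₁, hlogmax⟩ := hf.exists_nondegenerateMax_logScaledDensity hmax hS
  obtain ⟨T, c, j₀, hrel, hlog⟩ := hmatch.exists_affine hlogmax
  obtain ⟨A, hA⟩ := (toEuclideanCLM (𝕜 := ℝ) (n := Fin n)).surjective (T : E n →L[ℝ] E n)
  have hTA (v : E n) : T v = mulVecE A v := congr($hA v).symm
  simp only [hTA] at hrel hlog
  have hdet : 0 < A.det := by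
    obtain ⟨y, ⟨hy, hpos⟩, -, hpos'⟩ := (hr₀.and hrt₀).exists
    have hrel₀ (y : E n) : rt₀ y + (bt 0 - c) = mulVecE A (r₀ y + b 0) := by
      rw [← add_sub_assoc, sub_eq_iff_eq_add, ← hrel, Function.comp, r₀.symm_apply_apply]
    rw [det_fderiv_of_add_eq_mulVecE hrel₀ hy] at hpos'
    exact pos_of_mul_pos_left hpos' hpos.le
  have hdens (s : E n) :
      ft (mulVecE St⁻¹ (mulVecE A s + c)) = Real.exp (-j₀) * f (mulVecE S⁻¹ s) := by
    rw [← Real.exp_log (hft.2.1 _), ← Real.exp_log (hf.2.1 (mulVecE S⁻¹ s)), ← Real.exp_add]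
    exact congrArg Real.exp (eq_neg_add_of_add_eq ((add_comm _ _).trans (hlog s).symm))
  obtain ⟨rfl, hconj⟩ := hf.eq_zero_and_conj_eq hft hS.ne' hSt.ne' hdet.ne' hdens
  refine ⟨A, hdet, fun y x ↦ ?_, hconj⟩
  simpa only [Function.comp, r₀.symm_apply_apply, add_zero] using hrel (r₀ y) x

end ObsEquiv

end ObservationalEquivalence

section Skedastic

open Filter Topology

lemma frequently_nhds_of_mem_support {Z : Type*} [TopologicalSpace Z] [MeasurableSpace Z]
    {ν : Measure Z} {z₀ : Z} (hz₀ : z₀ ∈ ν.support) {p : Z → Prop} (hp : ∀ᵐ z ∂ν, p z) :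
    ∃ᶠ z in 𝓝 z₀, p z :=
  fun hev ↦ ((Measure.mem_support_iff_forall _).1 hz₀ _ hev).ne' hp

variable {ι Z : Type*} [DecidableEq ι] [TopologicalSpace Z]

/-- Diagonal scale matrices with positive entries, normalized to the identity at `z₀` and
continuous there: `SkedasticFn` over an arbitrary parameter space. -/
structure NormalizedSkedastic (σ : Z → Matrix ι ι ℝ) (z₀ : Z) : Prop where
  isDiag : ∀ z, (σ z).IsDiag
  pos : ∀ z i, 0 < σ z i i
  eq_one : σ z₀ = 1
  continuousAt : ContinuousAt σ z₀

lemma skedasticFn_iff_normalizedSkedastic {G L : ℕ} {σ : E L → Matrix (Fin G) (Fin G) ℝ}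
    {z₀ : E L} : SkedasticFn σ z₀ ↔ NormalizedSkedastic σ z₀ :=
  ⟨fun ⟨h₁, h₂, h₃, h₄⟩ ↦ ⟨h₁, h₂, h₃, h₄⟩, fun ⟨h₁, h₂, h₃, h₄⟩ ↦ ⟨h₁, h₂, h₃, h₄⟩⟩

/-- The entrywise square root of the diagonal part, which is the positive square root of a
positive definite diagonal matrix. -/
def diagSqrt (M : Matrix ι ι ℝ) : Matrix ι ι ℝ :=
  diagonal fun i ↦ √(M i i)

lemma continuous_diagSqrt : Continuous (diagSqrt (ι := ι)) := by
  unfold diagSqrt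
  fun_prop

variable {M Q : Matrix ι ι ℝ} {σ σt : Z → Matrix ι ι ℝ} {z₀ : Z}

lemma NormalizedSkedastic.posDef (hσ : NormalizedSkedastic σ z₀) (z : Z) : (σ z).PosDef :=
  posDef_of_isDiag (hσ.isDiag z) (hσ.pos z)

variable [Fintype ι]

lemma diagSqrt_mul_self_of_posDef (hM : M.PosDef) (hdiag : M.IsDiag) :
    diagSqrt M * diagSqrt M = M := by
  simp only [diagSqrt, diagonal_mul_diagonal, Real.mul_self_sqrt hM.diag_pos.le]
  exact hdiag.diagonal_diag

namespace NormalizedSkedastic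

lemma posDef_conj_mul_self (hσ : NormalizedSkedastic σ z₀) (hQ : Q * Qᵀ = 1) (z : Z) :
    (Q * (σ z * σ z) * Qᵀ).PosDef :=
  posDef_mul_mul_transpose hQ (posDef_mul_self (hσ.posDef z))

lemma continuousAt_conj_mul_self (hσ : NormalizedSkedastic σ z₀) (Q : Matrix ι ι ℝ) :
    ContinuousAt (fun z ↦ Q * (σ z * σ z) * Qᵀ) z₀ :=
  (continuousAt_const.mul (hσ.continuousAt.mul hσ.continuousAt)).mul continuousAt_const

lemma diagSqrt_conj (hσ : NormalizedSkedastic σ z₀) (hQ : Q * Qᵀ = 1) :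
    NormalizedSkedastic (fun z ↦ diagSqrt (Q * (σ z * σ z) * Qᵀ)) z₀ where
  isDiag _ := isDiag_diagonal _
  pos z i := by
    rw [diagSqrt, diagonal_apply_eq]
    exact Real.sqrt_pos.2 (hσ.posDef_conj_mul_self hQ z).diag_pos
  eq_one := by
    simp [diagSqrt, hσ.eq_one, hQ]
  continuousAt := continuous_diagSqrt.continuousAt.comp (hσ.continuousAt_conj_mul_self Q)

lemma diagSqrt_conj_eq (hσ : NormalizedSkedastic σ z₀) (hQ : Q * Qᵀ = 1) {z : Z}
    (hdiag : (Q * (σ z * σ z) * Qᵀ).IsDiag) :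
    diagSqrt (Q * (σ z * σ z) * Qᵀ) = Q * σ z * Qᵀ := by
  refine (mul_self_eq_mul_self_iff_of_posDef ((hσ.diagSqrt_conj hQ).posDef z)
    (posDef_mul_mul_transpose hQ (hσ.posDef z))).1 ?_
  rw [diagSqrt_mul_self_of_posDef (hσ.posDef_conj_mul_self hQ z) hdiag]
  calc Q * (σ z * σ z) * Qᵀ = Q * σ z * 1 * σ z * Qᵀ := by simp only [mul_one, mul_assoc]
    _ = Q * σ z * Qᵀ * (Q * σ z * Qᵀ) := by
      rw [← mul_eq_one_comm.1 hQ]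
      simp only [mul_assoc]

variable [MeasurableSpace Z] {ν : Measure Z}

lemma mul_transpose_eq_one_of_ae_eq (hσ : NormalizedSkedastic σ z₀)
    (hσt : NormalizedSkedastic σt z₀) (hz₀ : z₀ ∈ ν.support)
    (h : ∀ᵐ z ∂ν, Q * (σ z * σ z) * Qᵀ = σt z * σt z) : Q * Qᵀ = 1 := by
  have hlim := tendsto_nhds_unique_of_frequently_eq (hσ.continuousAt_conj_mul_self Q)
    (hσt.continuousAt.mul hσt.continuousAt) (frequently_nhds_of_mem_support hz₀ h)
  simpa only [hσ.eq_one, hσt.eq_one, mul_one, Pi.mul_apply] using hlim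

end NormalizedSkedastic

end Skedastic

section Identification

lemma surjective_of_rank_eq {n : ℕ} {V : Type*} [AddCommGroup V] [Module ℝ V] {f : V →ₗ[ℝ] E n}
    (hf : f.rank = (n : Cardinal)) : Function.Surjective f := by
  rw [← LinearMap.range_eq_top]
  refine Submodule.eq_top_of_finrank_eq ?_
  rw [finrank_euclideanSpace_fin]
  exact Module.finrank_eq_of_rank_eq hf

variable {n : ℕ} {X Z : Type*} [TopologicalSpace Z] [MeasurableSpace Z] {ν : Measure Z} {z₀ : Z}

theorem NormalizedSkedastic.exists_rotation_of_ae_exists_mulVecE [Nonempty X]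
    {σ σt : Z → Matrix (Fin n) (Fin n) ℝ} (hσ : NormalizedSkedastic σ z₀)
    (hσt : NormalizedSkedastic σt z₀) (hz₀ : z₀ ∈ ν.support) {r₀ rt₀ : E n → E n}
    (hr₀ : Function.Surjective r₀) {r₁ rt₁ : X → Z → E n}
    (h : ∀ᵐ z ∂ν, ∃ A : Matrix (Fin n) (Fin n) ℝ, 0 < A.det ∧
      (∀ y x, rt₀ y + rt₁ x z = mulVecE A (r₀ y + r₁ x z)) ∧
      A * (σ z * σ z) * Aᵀ = σt z * σt z) :
    ∃ Q : Matrix (Fin n) (Fin n) ℝ, Q * Qᵀ = 1 ∧ Q.det = 1 ∧ ∀ᵐ z ∂ν,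
      (∀ y x, rt₀ y + rt₁ x z = mulVecE Q (r₀ y + r₁ x z)) ∧
      Q * (σ z * σ z) * Qᵀ = σt z * σt z := by
  obtain ⟨x₀⟩ := ‹Nonempty X›
  obtain ⟨z₁, Q, hdet, hQ, -⟩ := (frequently_nhds_of_mem_support hz₀ h).exists
  have hrot : ∀ᵐ z ∂ν, (∀ y x, rt₀ y + rt₁ x z = mulVecE Q (r₀ y + r₁ x z)) ∧
      Q * (σ z * σ z) * Qᵀ = σt z * σt z := by
    filter_upwards [h] with z ⟨A, _, hA, hconj⟩
    obtain rfl : A = Q := eq_of_add_eq_mulVecE hr₀ (hA · x₀) (hQ · x₀)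
    exact ⟨hA, hconj⟩
  have hQQ := hσ.mul_transpose_eq_one_of_ae_eq hσt hz₀ (hrot.mono fun z hz ↦ hz.2)
  have hdet_sq : Q.det * Q.det = 1 := by
    simpa only [det_mul, det_transpose, det_one] using congrArg det hQQ
  exact ⟨Q, hQQ, (mul_self_eq_one_iff.1 hdet_sq).resolve_right (by linarith), hrot⟩

variable [NormedAddCommGroup X] [NormedSpace ℝ X] [FiniteDimensional ℝ X] [MeasurableSpace X]
  [BorelSpace X] {μ : Measure X} [μ.IsAddHaarMeasure]

theorem sem_heteroskedastic_identification_general (hz₀ : z₀ ∈ ν.support) {r₀ : E n ≃ₜ E n}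
    (hr₀ : AEOrientationPreserving r₀) (hr₀symm : LocallyLipschitz r₀.symm) {r₁ : X → Z → E n}
    (hr₁ : ∀ᵐ z ∂ν, IsOntoSubmersion μ (r₁ · z)) {f : E n → ℝ} (hf : AdmissibleDensity f)
    {u₀ : E n} {H : E n →L[ℝ] E n →L[ℝ] ℝ} (hmax : NondegenerateMax f u₀ H)
    {σ : Z → Matrix (Fin n) (Fin n) ℝ} (hσ : NormalizedSkedastic σ z₀) {rt₀ : E n → E n}
    (hrt₀ : AEOrientationPreserving rt₀) (hrt₀lip : LocallyLipschitz rt₀) {rt₁ : X → Z → E n}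
    (hrt₁ : ∀ᵐ z ∂ν, LocallyLipschitz (rt₁ · z)) :
    ((∃ (σt : Z → Matrix (Fin n) (Fin n) ℝ) (ft : E n → ℝ),
        NormalizedSkedastic σt z₀ ∧ AdmissibleDensity ft ∧
        ∀ᵐ z ∂ν, ObsEquiv μ f ft (σ z) (σt z) r₀ rt₀ (r₁ · z) (rt₁ · z)) ↔
      ∃ Q : Matrix (Fin n) (Fin n) ℝ, Q * Qᵀ = 1 ∧ Q.det = 1 ∧ ∀ᵐ z ∂ν,
        (∀ y x, rt₀ y + rt₁ x z = mulVecE Q (r₀ y + r₁ x z)) ∧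
        (Q * (σ z * σ z) * Qᵀ).IsDiag) ∧
    ∀ (σt : Z → Matrix (Fin n) (Fin n) ℝ) (ft : E n → ℝ) (Q : Matrix (Fin n) (Fin n) ℝ),
      NormalizedSkedastic σt z₀ → AdmissibleDensity ft →
      (∀ᵐ z ∂ν, ObsEquiv μ f ft (σ z) (σt z) r₀ rt₀ (r₁ · z) (rt₁ · z)) →
      (∀ᵐ z ∂ν, ∀ y x, rt₀ y + rt₁ x z = mulVecE Q (r₀ y + r₁ x z)) →
      ∀ᵐ z ∂ν, σt z * σt z = Q * (σ z * σ z) * Qᵀ := by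
  have hident (σt : Z → Matrix (Fin n) (Fin n) ℝ) (ft : E n → ℝ)
      (hσt : NormalizedSkedastic σt z₀) (hft : AdmissibleDensity ft)
      (hobs : ∀ᵐ z ∂ν, ObsEquiv μ f ft (σ z) (σt z) r₀ rt₀ (r₁ · z) (rt₁ · z)) :
      ∀ᵐ z ∂ν, ∃ A : Matrix (Fin n) (Fin n) ℝ, 0 < A.det ∧
        (∀ y x, rt₀ y + rt₁ x z = mulVecE A (r₀ y + r₁ x z)) ∧
        A * (σ z * σ z) * Aᵀ = σt z * σt z := by
    filter_upwards [hobs, hr₁, hrt₁] with z hz hr₁z hrt₁z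
    simpa only [(hσ.isDiag z).isSymm.eq, (hσt.isDiag z).isSymm.eq] using
      hz.exists_mulVecE hf hmax hft (hσ.posDef z).det_pos (hσt.posDef z).det_pos hr₀ hr₀symm hrt₀
        hrt₀lip hr₁z hrt₁z
  refine ⟨⟨?_, ?_⟩, ?_⟩
  · rintro ⟨σt, ft, hσt, hft, hobs⟩
    obtain ⟨Q, hQ, hdet, hrot⟩ := hσ.exists_rotation_of_ae_exists_mulVecE hσt hz₀ r₀.surjective
      (hident σt ft hσt hft hobs)
    refine ⟨Q, hQ, hdet, hrot.mono fun z ⟨hrel, hconj⟩ ↦ ⟨hrel, ?_⟩⟩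
    rw [hconj]
    exact isDiag_mul (hσt.isDiag z) (hσt.isDiag z)
  · rintro ⟨Q, hQ, hdet, hrot⟩
    refine ⟨_, _, hσ.diagSqrt_conj hQ, hf.comp_mulVecE_transpose hQ,
      hrot.mono fun z ⟨hrel, hdiag⟩ ↦ ?_⟩
    rw [hσ.diagSqrt_conj_eq hQ hdiag]
    exact .of_add_eq_mulVecE hQ hdet hr₀ hrel
  · intro σt ft Q hσt hft hobs hrel
    filter_upwards [hident σt ft hσt hft hobs, hrel] with z ⟨A, _, hA, hconj⟩ hQ
    rw [← hconj, eq_of_add_eq_mulVecE r₀.surjective (hA · 0) (hQ · 0)]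

end Identification

/-- **Observational equivalence in the heteroskedastic nonlinear SEM** (Theorem `thm:semhet`),
stated as the equivalence together with the `moreover` clause identifying `σ̃²`. -/
theorem sem_heteroskedastic_identification
    (G K L : ℕ) (hG : 1 ≤ G) (hGK : G ≤ K) (hL : 1 ≤ L)
    (ν : Measure (E L)) (Zs : Set (E L)) (hνZ : ν Zsᶜ = 0)
    (zstar : E L) (hzstar : zstar ∈ Zs)
    (hνzstar : ∀ U : Set (E L), IsOpen U → zstar ∈ U → 0 < ν U)
    (r₀ : E G → E G) (hr₀lip : LocallyLipschitz r₀) (hr₀bij : Function.Bijective r₀)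
    (hr₀inv : LocallyLipschitz (Function.invFun r₀))
    (hr₀det : ∀ᵐ y : E G, DifferentiableAt ℝ r₀ y ∧ 0 < (fderiv ℝ r₀ y).det)
    (r₁ : E K → E L → E G)
    (hr₁lip : ∀ z ∈ Zs, LocallyLipschitz (fun x => r₁ x z))
    (hr₁surj : ∀ z ∈ Zs, Function.Surjective (fun x => r₁ x z))
    (hr₁rank : ∀ z ∈ Zs, ∀ᵐ x : E K, DifferentiableAt ℝ (fun x' => r₁ x' z) x ∧
      LinearMap.rank (fderiv ℝ (fun x' => r₁ x' z) x).toLinearMap = (G : Cardinal))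
    (fU : E G → ℝ) (hfU : AdmissibleDensity fU) (hfUmax : LocalMaxCondition fU)
    (σ : E L → Matrix (Fin G) (Fin G) ℝ) (hσ : SkedasticFn σ zstar)
    (rt₀ : E G → E G) (hrt₀lip : LocallyLipschitz rt₀) (hrt₀bij : Function.Bijective rt₀)
    (hrt₀det : ∀ᵐ y : E G, DifferentiableAt ℝ rt₀ y ∧ 0 < (fderiv ℝ rt₀ y).det)
    (rt₁ : E K → E L → E G)
    (hrt₁lip : ∀ z ∈ Zs, LocallyLipschitz (fun x => rt₁ x z)) :
    ((∃ (σt : E L → Matrix (Fin G) (Fin G) ℝ) (fUt : E G → ℝ),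
        SkedasticFn σt zstar ∧ AdmissibleDensity fUt ∧
        ∀ᵐ z ∂ν, z ∈ Zs →
          ∀ᵐ w : E G × E K,
            fU (mulVecE (σ z)⁻¹ (r₀ w.1 + r₁ w.2 z)) * ((σ z)⁻¹.det * (fderiv ℝ r₀ w.1).det)
              = fUt (mulVecE (σt z)⁻¹ (rt₀ w.1 + rt₁ w.2 z))
                  * ((σt z)⁻¹.det * (fderiv ℝ rt₀ w.1).det))
      ↔ ∃ Q : Matrix (Fin G) (Fin G) ℝ, Q * Qᵀ = 1 ∧ Q.det = 1 ∧
          ∀ᵐ z ∂ν, z ∈ Zs →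
            (∀ (y : E G) (x : E K), rt₀ y + rt₁ x z = mulVecE Q (r₀ y + r₁ x z)) ∧
            (Q * (σ z * σ z) * Qᵀ).IsDiag)
    ∧
    (∀ (σt : E L → Matrix (Fin G) (Fin G) ℝ) (fUt : E G → ℝ)
        (Q : Matrix (Fin G) (Fin G) ℝ),
      SkedasticFn σt zstar → AdmissibleDensity fUt →
      (∀ᵐ z ∂ν, z ∈ Zs →
        ∀ᵐ w : E G × E K,
          fU (mulVecE (σ z)⁻¹ (r₀ w.1 + r₁ w.2 z)) * ((σ z)⁻¹.det * (fderiv ℝ r₀ w.1).det)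
            = fUt (mulVecE (σt z)⁻¹ (rt₀ w.1 + rt₁ w.2 z))
                * ((σt z)⁻¹.det * (fderiv ℝ rt₀ w.1).det)) →
      Q * Qᵀ = 1 → Q.det = 1 →
      (∀ᵐ z ∂ν, z ∈ Zs →
        (∀ (y : E G) (x : E K), rt₀ y + rt₁ x z = mulVecE Q (r₀ y + r₁ x z)) ∧
        (Q * (σ z * σ z) * Qᵀ).IsDiag) →
      ∀ᵐ z ∂ν, z ∈ Zs → σt z * σt z = Q * (σ z * σ z) * Qᵀ) := by
  have hZ : ∀ᵐ z ∂ν, z ∈ Zs := hνZ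
  have hae (p : E L → Prop) : (∀ᵐ z ∂ν, z ∈ Zs → p z) ↔ ∀ᵐ z ∂ν, p z :=
    Filter.eventually_congr (hZ.mono fun z hz ↦ imp_iff_right hz)
  have hsupp : zstar ∈ ν.support :=
    (nhds_basis_opens zstar).mem_measureSupport.2 fun U hU ↦ hνzstar U hU.2 hU.1
  have hr₁ : ∀ᵐ z ∂ν, IsOntoSubmersion volume (r₁ · z) := hZ.mono fun z hz ↦
    ⟨hr₁lip z hz, hr₁surj z hz, (hr₁rank z hz).mono fun x hx ↦ ⟨hx.1, surjective_of_rank_eq hx.2⟩⟩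
  obtain ⟨u₀, H, hmax⟩ := hfUmax.exists_nondegenerateMax
  let e : E G ≃ₜ E G :=
    ⟨⟨r₀, Function.invFun r₀, Function.leftInverse_invFun hr₀bij.1,
      Function.rightInverse_invFun hr₀bij.2⟩, hr₀lip.continuous, hr₀inv.continuous⟩
  have hident := sem_heteroskedastic_identification_general hsupp (r₀ := e) hr₀det hr₀inv hr₁ hfU
    hmax (skedasticFn_iff_normalizedSkedastic.1 hσ) hrt₀det hrt₀lip (hZ.mono hrt₁lip)
  simp only [hae, skedasticFn_iff_normalizedSkedastic]
  exact ⟨hident.1, fun σt fUt Q hσt hfUt hobs _ _ hQ ↦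
    hident.2 σt fUt Q hσt hfUt hobs (hQ.mono fun z hz ↦ hz.1)⟩
end
end

section
/- Let p, m ≥ 1 and let f : ℝ^p → ℝ^p be either a piecewise linear function or a threshold affine function, with associated matrices Φ⁽¹⁾, …, Φ⁽ᴸ⁾ ∈ ℝ^{p×p} satisfying the determinantal condition: sgn det Φ⁽ˡ⁾ = sgn det Φ⁽¹⁾ ≠ 0 for all ℓ. Let K : ℝ^p → ℝ be m times continuously differentiable and non-negative, with ∫_{ℝ^p} K(u) du = 1, ∫_{ℝ^p} u K(u) du = 0, ∫_{ℝ^p} ‖u‖ K(u) du < ∞, and ∫_{ℝ^p} ‖u‖ |∂_{u_{α₁}} ⋯ ∂_{u_{αₙ}} K(u)| du < ∞ for every 1 ≤ n ≤ m and every choice of indices α₁, …, αₙ ∈ {1, …, p}. Define f_K(z) := ∫_{ℝ^p} f(z + u) K(u) du. Then f_K is a bijection of ℝ^p, both f_K and f_K⁻¹ are Lipschitz continuous, and f_K is m times continuously differentiable. -/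
open MeasureTheory Matrix

noncomputable section

/-- A (continuous) piecewise affine function `f` with regimes `Z`, intercepts `φ`
and coefficient matrices `Φ`: the regimes are convex, nonempty, and partition `ℝ^p`,
and `f z = φ ℓ + Φ ℓ z` on the regime `Z ℓ`. -/
def IsPiecewiseAffine {p L : ℕ} (f : E p → E p) (Z : Fin L → Set (E p))
    (φ : Fin L → E p) (Φ : Fin L → Matrix (Fin p) (Fin p) ℝ) : Prop :=
  Continuous f ∧ (∀ ℓ, Convex ℝ (Z ℓ)) ∧ (∀ ℓ, (Z ℓ).Nonempty) ∧
    (∀ z : E p, ∃! ℓ, z ∈ Z ℓ) ∧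
    ∀ ℓ, ∀ z ∈ Z ℓ, f z = φ ℓ + mulVecE (Φ ℓ) z

/-- The cone `C_I` determined by the vectors `a` and the index set `I`. -/
def coneOf {p : ℕ} (a : Fin p → E p) (I : Set (Fin p)) : Set (E p) :=
  {z | (∀ i ∈ I, 0 ≤ ∑ j, a i j * z j) ∧ (∀ i ∉ I, (∑ j, a i j * z j) < 0)}

/-- A (continuous) piecewise linear function: piecewise affine with zero intercepts, where each
regime is a union of cones `C_I` determined by a fixed basis `a₁, …, a_p` of `ℝ^p`. -/
def IsPiecewiseLinear {p L : ℕ} (f : E p → E p) (Z : Fin L → Set (E p))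
    (φ : Fin L → E p) (Φ : Fin L → Matrix (Fin p) (Fin p) ℝ) : Prop :=
  IsPiecewiseAffine f Z φ Φ ∧ (∀ ℓ, φ ℓ = 0) ∧
    ∃ a : Fin p → E p, LinearIndependent ℝ a ∧ Submodule.span ℝ (Set.range a) = ⊤ ∧
      ∀ ℓ, ∃ S : Set (Set (Fin p)), Z ℓ = ⋃ I ∈ S, coneOf a I

/-- A (continuous) threshold affine function: piecewise affine, whose regimes are the bands
`{z : τ_{ℓ-1} < aᵀz ≤ τ_ℓ}` for some `a ≠ 0` and thresholds `-∞ = τ₀ < τ₁ < ⋯ < τ_L = +∞`. -/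
def IsThresholdAffine {p L : ℕ} (f : E p → E p) (Z : Fin L → Set (E p))
    (φ : Fin L → E p) (Φ : Fin L → Matrix (Fin p) (Fin p) ℝ) : Prop :=
  IsPiecewiseAffine f Z φ Φ ∧
    ∃ a : E p, a ≠ 0 ∧ ∃ τ : Fin (L + 1) → EReal, StrictMono τ ∧
      τ 0 = ⊥ ∧ τ (Fin.last L) = ⊤ ∧
      ∀ ℓ : Fin L, Z ℓ =
        {z : E p | τ ℓ.castSucc < ((∑ j, a j * z j : ℝ) : EReal) ∧
          ((∑ j, a j * z j : ℝ) : EReal) ≤ τ ℓ.succ}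

/-!
Every increment of `f` along a segment is an average of the affine pieces it crosses, so
`f x - f y = A (x - y)` for some `A` in the convex hull of the matrices `Φ ℓ`. The determinantal
condition passes from the `Φ ℓ` to their convex hull: in a suitable basis, continuity of `f` forces
any matrix whose columns are picked from different `Φ ℓ` to agree with a single one of them, and a
multilinear form such as the determinant is positive on convex hulls as soon as it is positive on
all such selections. Thus `f` has its secants in a compact convex set of invertible maps.

Averaging against `K` preserves this, and it makes a map bi-Lipschitz. It also makes it onto: a
bi-Lipschitz `C¹` map has open and closed range, and the general case follows by mollification,
which preserves secants as well. Finally, since `f` grows at most linearly, the first moments of the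
derivatives of `K` allow all `m` derivatives of `f_K` to be thrown onto `K`.
-/

open Filter Topology Set Function ContinuousLinearMap
open scoped NNReal Convolution

section Secants

variable {V W : Type*} [NormedAddCommGroup V] [NormedSpace ℝ V]
  [NormedAddCommGroup W] [NormedSpace ℝ W] {𝒜 : Set (V →L[ℝ] W)} {F : V → W}

/-- `F` has secants in `𝒜` if each of its increments `F x - F y` is the image of `x - y` under some
linear map in `𝒜`. This is the mean value inclusion satisfied by a Lipschitz map `F` when `𝒜`
contains the closed convex hull of its derivatives. -/
def HasSecantsIn (𝒜 : Set (V →L[ℝ] W)) (F : V → W) : Prop :=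
  ∀ x y, ∃ A ∈ 𝒜, F x - F y = A (x - y)

theorem HasSecantsIn.exists_lipschitzWith (hF : HasSecantsIn 𝒜 F) (h𝒜 : Bornology.IsBounded 𝒜) :
    ∃ C : ℝ≥0, LipschitzWith C F := by
  obtain ⟨C, hC, hC𝒜⟩ := h𝒜.exists_pos_norm_le
  lift C to ℝ≥0 using hC.le
  refine ⟨C, LipschitzWith.of_dist_le_mul fun x y => ?_⟩
  obtain ⟨A, hA, hxy⟩ := hF x y
  simpa [dist_eq_norm, hxy] using A.le_of_opNorm_le (hC𝒜 A hA) (x - y)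

theorem exists_pos_forall_mul_norm_le_norm_apply [FiniteDimensional ℝ V] (h𝒜 : IsCompact 𝒜)
    (hinj : ∀ A ∈ 𝒜, Injective A) : ∃ c > 0, ∀ A ∈ 𝒜, ∀ v, c * ‖v‖ ≤ ‖A v‖ := by
  have hsphere : ∀ q ∈ 𝒜 ×ˢ Metric.sphere (0 : V) 1, 0 < ‖q.1 q.2‖ := by
    rintro ⟨A, v⟩ ⟨hA, hv⟩
    exact norm_pos_iff.2 ((map_ne_zero_iff A (hinj A hA)).2 (ne_zero_of_mem_unit_sphere ⟨v, hv⟩))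
  obtain ⟨c, hc, hmin⟩ := (h𝒜.prod (isCompact_sphere 0 1)).exists_forall_le'
    (by fun_prop : Continuous fun q : (V →L[ℝ] W) × V => ‖q.1 q.2‖).continuousOn hsphere
  refine ⟨c, hc, fun A hA v => ?_⟩
  rcases eq_or_ne v 0 with rfl | hv
  · simp
  · have hunit : ‖v‖⁻¹ • v ∈ Metric.sphere (0 : V) 1 := by simp [norm_smul, hv]
    have := hmin (A, ‖v‖⁻¹ • v) ⟨hA, hunit⟩
    rwa [map_smul, norm_smul, norm_inv, norm_norm, ← div_eq_inv_mul,
      le_div_iff₀ (norm_pos_iff.2 hv)] at this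

theorem HasSecantsIn.exists_antilipschitzWith [FiniteDimensional ℝ V] (hF : HasSecantsIn 𝒜 F)
    (h𝒜 : IsCompact 𝒜) (hinj : ∀ A ∈ 𝒜, Injective A) : ∃ C : ℝ≥0, AntilipschitzWith C F := by
  obtain ⟨c, hc, hc𝒜⟩ := exists_pos_forall_mul_norm_le_norm_apply h𝒜 hinj
  lift c to ℝ≥0 using hc.le
  refine ⟨c⁻¹, AntilipschitzWith.of_le_mul_dist fun x y => ?_⟩
  obtain ⟨A, hA, hxy⟩ := hF x y
  rw [dist_eq_norm, dist_eq_norm, hxy, NNReal.coe_inv, inv_mul_eq_div, le_div_iff₀ hc, mul_comm]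
  exact hc𝒜 A hA (x - y)

theorem antilipschitzWith_of_hasFDerivAt {F' : V →L[ℝ] W} {x : V} {C : ℝ≥0}
    (hF : AntilipschitzWith C F) (hF' : HasFDerivAt F F' x) : AntilipschitzWith C F' := by
  refine F'.antilipschitz_of_bound fun v => ?_
  refine ge_of_tendsto ((hF'.hasLineDerivAt v).tendsto_slope_zero.norm.const_mul (C : ℝ)) ?_
  filter_upwards [self_mem_nhdsWithin] with t ht
  have hsecant : ‖t‖ * ‖v‖ ≤ C * ‖F (x + t • v) - F x‖ := by
    simpa [dist_eq_norm, norm_smul] using hF.le_mul_dist (x + t • v) x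
  rw [norm_smul, norm_inv, mul_left_comm, ← div_eq_inv_mul, le_div_iff₀ (norm_pos_iff.2 ht)]
  linarith

variable [FiniteDimensional ℝ V] [FiniteDimensional ℝ W]

theorem isClosed_range_of_antilipschitzWith {C : ℝ≥0} (hF : AntilipschitzWith C F)
    (hcont : Continuous F) : IsClosed (range F) := by
  have := FiniteDimensional.proper_real V
  have := FiniteDimensional.proper_real W
  refine (isProperMap_iff_tendsto_cocompact.2 ⟨hcont, ?_⟩).isClosedMap.isClosed_range
  simpa only [Metric.cobounded_eq_cocompact] using hF.tendsto_cobounded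

theorem surjective_of_contDiff_of_antilipschitzWith {C : ℝ≥0}
    (hdim : Module.finrank ℝ V = Module.finrank ℝ W) (hF : ContDiff ℝ 1 F)
    (hanti : AntilipschitzWith C F) : Surjective F := by
  have hopen : IsOpenMap F := isOpenMap_iff_nhds_le.2 fun x => by
    have hstrict : HasStrictFDerivAt F (fderiv ℝ F x) x :=
      hF.contDiffAt.hasStrictFDerivAt one_ne_zero
    have hinj : Injective (fderiv ℝ F x) :=
      (antilipschitzWith_of_hasFDerivAt hanti hstrict.hasFDerivAt).injective
    have hsurj : Surjective (fderiv ℝ F x) :=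
      (LinearMap.injective_iff_surjective_of_finrank_eq_finrank hdim
        (f := (fderiv ℝ F x).toLinearMap)).1 hinj
    exact (hstrict.map_nhds_eq_of_surj (LinearMap.range_eq_top.2 hsurj)).ge
  have hclosed : IsClosed (range F) := isClosed_range_of_antilipschitzWith hanti hF.continuous
  exact range_eq_univ.1
    (IsClopen.eq_univ ⟨hclosed, hopen.isOpen_range⟩ (range_nonempty F))

end Secants

section Averages

theorem integral_smul_mem_of_convex {α W : Type*} [MeasurableSpace α] {μ : Measure α}
    [NormedAddCommGroup W] [NormedSpace ℝ W] [CompleteSpace W] {S : Set W} (hS : Convex ℝ S)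
    (hSc : IsClosed S) {k : α → ℝ} {g : α → W} (hk : ∀ t, 0 ≤ k t) (hk1 : ∫ t, k t ∂μ = 1)
    (hg : ∀ t, g t ∈ S) (hkg : Integrable (fun t => k t • g t) μ) :
    ∫ t, k t • g t ∂μ ∈ S := by
  have hkint : Integrable k μ := .of_integral_ne_zero (by simp [hk1])
  by_contra hmem
  obtain ⟨q, c, hqS, hcq⟩ := geometric_hahn_banach_closed_point hS hSc hmem
  have hle : q (∫ t, k t • g t ∂μ) ≤ c := calc
    q (∫ t, k t • g t ∂μ) = ∫ t, k t * q (g t) ∂μ := by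
      simp_rw [← q.integral_comp_comm hkg, map_smul, smul_eq_mul]
    _ ≤ ∫ t, k t * c ∂μ :=
      integral_mono (by simpa using q.integrable_comp hkg) (hkint.mul_const c)
        fun t => mul_le_mul_of_nonneg_left (hqS _ (hg t)).le (hk t)
    _ = c := by rw [integral_mul_const, hk1, one_mul]
  exact absurd hcq hle.not_gt

variable {V W : Type*} [NormedAddCommGroup V] [NormedSpace ℝ V]
  [NormedAddCommGroup W] [NormedSpace ℝ W] {𝒜 : Set (V →L[ℝ] W)} {F : V → W}

theorem HasSecantsIn.convolution [CompleteSpace W] [MeasurableSpace V] {μ : Measure V} {k : V → ℝ}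
    (hF : HasSecantsIn 𝒜 F) (h𝒜 : IsCompact 𝒜) (hconv : Convex ℝ 𝒜) (hk : ∀ t, 0 ≤ k t)
    (hk1 : ∫ t, k t ∂μ = 1) (hex : ConvolutionExists k F (lsmul ℝ ℝ) μ) :
    HasSecantsIn 𝒜 (k ⋆[lsmul ℝ ℝ, μ] F) := by
  intro x y
  let ev : (V →L[ℝ] W) →L[ℝ] W := ContinuousLinearMap.apply ℝ W (x - y)
  have hdiff : (k ⋆[lsmul ℝ ℝ, μ] F) x - (k ⋆[lsmul ℝ ℝ, μ] F) y =
      ∫ t, k t • (F (x - t) - F (y - t)) ∂μ := by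
    simp_rw [smul_sub]
    exact (integral_sub (hex x) (hex y)).symm
  have hmem : ∫ t, k t • (F (x - t) - F (y - t)) ∂μ ∈ ev '' 𝒜 := by
    refine integral_smul_mem_of_convex (hconv.is_linear_image ev.isBoundedLinearMap.toIsLinearMap)
      (h𝒜.image ev.continuous).isClosed hk hk1 (fun t => ?_) ?_
    · obtain ⟨A, hA, h⟩ := hF (x - t) (y - t)
      exact ⟨A, hA, by simp [ev, h]⟩
    · simp_rw [smul_sub]
      exact (hex x).sub (hex y)
  obtain ⟨A, hA, h⟩ := hmem
  exact ⟨A, hA, hdiff.trans h.symm⟩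

theorem HasSecantsIn.exists_contDiff_dist_le [FiniteDimensional ℝ V] [FiniteDimensional ℝ W]
    (hF : HasSecantsIn 𝒜 F) (h𝒜 : IsCompact 𝒜) (hconv : Convex ℝ 𝒜) {ε : ℝ} (hε : 0 < ε) :
    ∃ G : V → W, ContDiff ℝ 1 G ∧ HasSecantsIn 𝒜 G ∧ ∀ x, dist (G x) (F x) ≤ ε := by
  borelize V
  let μ : Measure V := Measure.addHaar
  obtain ⟨C, hC⟩ := hF.exists_lipschitzWith h𝒜.isBounded
  obtain ⟨δ, hδ, hFδ⟩ := Metric.uniformContinuous_iff.1 hC.uniformContinuous ε hε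
  let φ : ContDiffBump (0 : V) := ⟨δ / 2, δ, half_pos hδ, half_lt_self hδ⟩
  have hFloc : LocallyIntegrable F μ := hC.continuous.locallyIntegrable
  refine ⟨φ.normed μ ⋆[lsmul ℝ ℝ, μ] F,
    φ.hasCompactSupport_normed.contDiff_convolution_left _ φ.contDiff_normed hFloc,
    hF.convolution h𝒜 hconv φ.nonneg_normed φ.integral_normed
      (φ.hasCompactSupport_normed.convolutionExists_left _ φ.continuous_normed hFloc), fun x => ?_⟩
  exact φ.dist_normed_convolution_le hC.continuous.aestronglyMeasurable fun y hy => (hFδ hy).le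

theorem HasSecantsIn.surjective [FiniteDimensional ℝ V] [FiniteDimensional ℝ W]
    (hdim : Module.finrank ℝ V = Module.finrank ℝ W) (hF : HasSecantsIn 𝒜 F) (h𝒜 : IsCompact 𝒜)
    (hconv : Convex ℝ 𝒜) (hinj : ∀ A ∈ 𝒜, Injective A) : Surjective F := by
  obtain ⟨C, hC⟩ := hF.exists_lipschitzWith h𝒜.isBounded
  obtain ⟨C', hC'⟩ := hF.exists_antilipschitzWith h𝒜 hinj
  intro y
  refine (isClosed_range_of_antilipschitzWith hC' hC.continuous).closure_subset
    (Metric.mem_closure_range_iff.2 fun ε hε => ?_)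
  obtain ⟨G, hG, hGsec, hGF⟩ := hF.exists_contDiff_dist_le h𝒜 hconv (half_pos hε)
  obtain ⟨C'', hC''⟩ := hGsec.exists_antilipschitzWith h𝒜 hinj
  obtain ⟨x, rfl⟩ := surjective_of_contDiff_of_antilipschitzWith hdim hG hC'' y
  exact ⟨x, (hGF x).trans_lt (half_lt_self hε)⟩

theorem HasSecantsIn.bijective_and_exists_lipschitzWith_invFun [FiniteDimensional ℝ V]
    [FiniteDimensional ℝ W] (hdim : Module.finrank ℝ V = Module.finrank ℝ W)
    (hF : HasSecantsIn 𝒜 F) (h𝒜 : IsCompact 𝒜) (hconv : Convex ℝ 𝒜)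
    (hinj : ∀ A ∈ 𝒜, Injective A) : Bijective F ∧ ∃ C : ℝ≥0, LipschitzWith C (invFun F) := by
  obtain ⟨C, hC⟩ := hF.exists_antilipschitzWith h𝒜 hinj
  have hsurj : Surjective F := hF.surjective hdim h𝒜 hconv hinj
  exact ⟨⟨hC.injective, hsurj⟩, C, hC.to_rightInverse (rightInverse_invFun hsurj)⟩

end Averages

section Smoothness

theorem integrable_comp_add_smul_prod {V W : Type*} [NormedAddCommGroup V] [NormedSpace ℝ V]
    [FiniteDimensional ℝ V] [MeasurableSpace V] [BorelSpace V] [NormedAddCommGroup W]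
    {μ : Measure V} [μ.IsAddHaarMeasure] {ν : Measure ℝ} [IsFiniteMeasure ν] {h : V → W}
    (hh : Integrable h μ) (v : V) :
    Integrable (fun q : V × ℝ => h (q.1 + q.2 • v)) (μ.prod ν) := by
  have hqmp : Measure.QuasiMeasurePreserving (fun q : V × ℝ => q.1 + q.2 • v) (μ.prod ν) μ :=
    QuasiMeasurePreserving.prod_of_left (by fun_prop) (.of_forall fun s =>
      (measurePreserving_add_right μ (s • v)).quasiMeasurePreserving)
  have hmeas : AEStronglyMeasurable (fun q : V × ℝ => h (q.1 + q.2 • v)) (μ.prod ν) :=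
    hh.1.comp_quasiMeasurePreserving hqmp
  rw [integrable_prod_iff' hmeas]
  refine ⟨.of_forall fun s => hh.comp_add_right (s • v), ?_⟩
  simp_rw [integral_add_right_eq_self fun t => ‖h t‖]
  exact integrable_const _

theorem hasFDerivAt_of_sub_eq_intervalIntegral {V W : Type*} [NormedAddCommGroup V]
    [NormedSpace ℝ V] [NormedAddCommGroup W] [NormedSpace ℝ W] [CompleteSpace W] {F : V → W}
    {D : V → V →L[ℝ] W} {x : V} (hD : Continuous D)
    (h : ∀ v, F (x + v) - F x = ∫ s in (0 : ℝ)..1, D (x + s • v) v) : HasFDerivAt F (D x) x := by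
  rw [hasFDerivAt_iff_isLittleO_nhds_zero, Asymptotics.isLittleO_iff]
  intro ε hε
  obtain ⟨δ, hδ, hDδ⟩ := Metric.continuousAt_iff.1 hD.continuousAt ε hε
  filter_upwards [Metric.ball_mem_nhds (0 : V) hδ] with v hv
  have hremainder : F (x + v) - F x - D x v =
      ∫ s in (0 : ℝ)..1, (D (x + s • v) - D x) v := by
    simp_rw [_root_.sub_apply]
    rw [intervalIntegral.integral_sub, ← h]
    · simp
    · exact Continuous.intervalIntegrable (by fun_prop) _ _
    · exact Continuous.intervalIntegrable (by fun_prop) _ _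
  have hbound : ∀ s ∈ uIoc (0 : ℝ) 1, ‖(D (x + s • v) - D x) v‖ ≤ ε * ‖v‖ := by
    intro s hs
    rw [uIoc_of_le zero_le_one] at hs
    refine le_of_opNorm_le _ ?_ v
    rw [← dist_eq_norm]
    refine (hDδ ?_).le
    rw [dist_self_add_left, norm_smul, Real.norm_of_nonneg hs.1.le]
    exact (mul_le_of_le_one_left (norm_nonneg v) hs.2).trans_lt (mem_ball_zero_iff.1 hv)
  rw [hremainder]
  simpa using intervalIntegral.norm_integral_le_of_norm_le_const hbound

theorem apply_add_sub_eq_setIntegral_fderiv {V G H W : Type*} [NormedAddCommGroup V]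
    [NormedSpace ℝ V] [NormedAddCommGroup G] [NormedSpace ℝ G] [NormedAddCommGroup H]
    [NormedSpace ℝ H] [NormedAddCommGroup W] [NormedSpace ℝ W] [CompleteSpace W] {f : V → G}
    (hf : ContDiff ℝ 1 f) (L : G →L[ℝ] H →L[ℝ] W) (t v : V) (w : H) :
    L (f (t + v)) w - L (f t) w = ∫ s : ℝ in Ioc (0 : ℝ) 1, L (fderiv ℝ f (t + s • v) v) w := by
  have : Continuous (fderiv ℝ f) := hf.continuous_fderiv one_ne_zero
  have hderiv : ∀ s ∈ uIcc (0 : ℝ) 1, HasDerivAt (fun s : ℝ => L (f (t + s • v)) w)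
      (L (fderiv ℝ f (t + s • v) v) w) s := fun s _ => by
    have hline : HasDerivAt (fun s : ℝ => t + s • v) v s := by
      simpa using ((hasDerivAt_id s).smul_const v).const_add t
    exact ((L.flip w).hasFDerivAt.comp _
      (hf.differentiable one_ne_zero _).hasFDerivAt).comp_hasDerivAt s hline
  rw [← intervalIntegral.integral_of_le zero_le_one,
    intervalIntegral.integral_eq_sub_of_hasDerivAt hderiv
      (Continuous.intervalIntegrable (by fun_prop) _ _)]
  simp

theorem one_add_norm_sub_pow_le {V : Type*} [NormedAddCommGroup V] (x t : V) (r : ℕ) :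
    (1 + ‖x - t‖) ^ r ≤ (1 + ‖x‖) ^ r * (1 + ‖t‖) ^ r := by
  rw [← mul_pow]
  gcongr
  nlinarith [norm_sub_le x t, norm_nonneg x, norm_nonneg t]

theorem norm_apply_comp_sub_le {V G H W : Type*} [NormedAddCommGroup V]
    [NormedAddCommGroup G] [NormedSpace ℝ G] [NormedAddCommGroup H] [NormedSpace ℝ H]
    [NormedAddCommGroup W] [NormedSpace ℝ W] {g : V → H} {B : ℝ} {r : ℕ}
    (hg : ∀ x, ‖g x‖ ≤ B * (1 + ‖x‖) ^ r) (L : G →L[ℝ] H →L[ℝ] W) (a : G) (x t : V) :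
    ‖L a (g (x - t))‖ ≤ ‖L‖ * B * (1 + ‖x‖) ^ r * ((1 + ‖t‖) ^ r * ‖a‖) := by
  have hB : 0 ≤ B := by simpa using (norm_nonneg _).trans (hg 0)
  calc ‖L a (g (x - t))‖ ≤ ‖L‖ * ‖a‖ * ‖g (x - t)‖ := L.le_opNorm₂ a _
    _ ≤ ‖L‖ * ‖a‖ * (B * ((1 + ‖x‖) ^ r * (1 + ‖t‖) ^ r)) := by
      gcongr
      exact (hg _).trans (mul_le_mul_of_nonneg_left (one_add_norm_sub_pow_le x t r) hB)
    _ = ‖L‖ * B * (1 + ‖x‖) ^ r * ((1 + ‖t‖) ^ r * ‖a‖) := by ring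

variable {V G H W : Type*} [NormedAddCommGroup V] [NormedSpace ℝ V]
  [FiniteDimensional ℝ V] [MeasurableSpace V] [BorelSpace V] {μ : Measure V}
  [NormedAddCommGroup G] [NormedSpace ℝ G] [NormedAddCommGroup H] [NormedSpace ℝ H]
  [NormedAddCommGroup W] [NormedSpace ℝ W] {f : V → G} {g : V → H} {B : ℝ} {r : ℕ}

theorem convolutionExists_of_polynomial_growth (hf : Continuous f) (hgc : Continuous g)
    (hg : ∀ x, ‖g x‖ ≤ B * (1 + ‖x‖) ^ r) (hint : Integrable (fun t => (1 + ‖t‖) ^ r * ‖f t‖) μ)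
    (L : G →L[ℝ] H →L[ℝ] W) : ConvolutionExists f g L μ := fun x =>
  (hint.const_mul _).mono'
    (by fun_prop : Continuous fun t => L (f t) (g (x - t))).aestronglyMeasurable
    (.of_forall fun t => norm_apply_comp_sub_le hg L (f t) x t)

theorem continuous_convolution_of_polynomial_growth (hf : Continuous f) (hgc : Continuous g)
    (hg : ∀ x, ‖g x‖ ≤ B * (1 + ‖x‖) ^ r) (hint : Integrable (fun t => (1 + ‖t‖) ^ r * ‖f t‖) μ)
    (L : G →L[ℝ] H →L[ℝ] W) : Continuous (f ⋆[L, μ] g) := by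
  have hB : 0 ≤ B := by simpa using (norm_nonneg _).trans (hg 0)
  refine continuous_iff_continuousAt.2 fun x => ?_
  refine continuousAt_of_dominated
    (bound := fun t => ‖L‖ * B * (2 + ‖x‖) ^ r * ((1 + ‖t‖) ^ r * ‖f t‖))
    (.of_forall fun y =>
      (by fun_prop : Continuous fun t => L (f t) (g (y - t))).aestronglyMeasurable) ?_
    (hint.const_mul _) (.of_forall fun t => by fun_prop)
  filter_upwards [Metric.ball_mem_nhds x one_pos] with y hy
  have hy' : 1 + ‖y‖ ≤ 2 + ‖x‖ := by
    have := norm_le_norm_add_norm_sub' y x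
    rw [mem_ball_iff_norm] at hy
    linarith
  refine .of_forall fun t => (norm_apply_comp_sub_le hg L (f t) y t).trans ?_
  gcongr

variable [μ.IsAddHaarMeasure]

theorem integrable_prod_fderiv_add_smul_apply (hf : ContDiff ℝ 1 f) (hgc : Continuous g)
    (hg : ∀ x, ‖g x‖ ≤ B * (1 + ‖x‖) ^ r)
    (hint : Integrable (fun t => (1 + ‖t‖) ^ r * ‖fderiv ℝ f t‖) μ) (L : G →L[ℝ] H →L[ℝ] W)
    (x v : V) :
    Integrable (fun q : V × ℝ => L (fderiv ℝ f (q.1 + q.2 • v) v) (g (x - q.1)))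
      (μ.prod (volume.restrict (Ioc 0 1))) := by
  have : Continuous (fderiv ℝ f) := hf.continuous_fderiv one_ne_zero
  have hB : 0 ≤ B := by simpa using (norm_nonneg _).trans (hg 0)
  refine ((integrable_comp_add_smul_prod hint v).const_mul
    (‖L‖ * B * (1 + (‖x‖ + ‖v‖)) ^ r * ‖v‖)).mono'
    (by fun_prop : Continuous fun q : V × ℝ =>
      L (fderiv ℝ f (q.1 + q.2 • v) v) (g (x - q.1))).aestronglyMeasurable ?_
  have hIoc : ∀ᵐ q ∂μ.prod (volume.restrict (Ioc (0 : ℝ) 1)), q.2 ∈ Ioc (0 : ℝ) 1 :=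
    Measure.quasiMeasurePreserving_snd.ae (ae_restrict_mem measurableSet_Ioc)
  filter_upwards [hIoc] with ⟨t, s⟩ hs
  have hx : ‖x + s • v‖ ≤ ‖x‖ + ‖v‖ := (norm_add_le _ _).trans (by
    rw [norm_smul, Real.norm_of_nonneg hs.1.le]
    gcongr
    exact mul_le_of_le_one_left (norm_nonneg v) hs.2)
  calc ‖L (fderiv ℝ f (t + s • v) v) (g (x - t))‖
      = ‖L (fderiv ℝ f (t + s • v) v) (g (x + s • v - (t + s • v)))‖ := by
        rw [add_sub_add_right_eq_sub]
    _ ≤ ‖L‖ * B * (1 + ‖x + s • v‖) ^ r *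
          ((1 + ‖t + s • v‖) ^ r * ‖fderiv ℝ f (t + s • v) v‖) :=
        norm_apply_comp_sub_le hg L _ _ _
    _ ≤ ‖L‖ * B * (1 + (‖x‖ + ‖v‖)) ^ r *
          ((1 + ‖t + s • v‖) ^ r * (‖fderiv ℝ f (t + s • v)‖ * ‖v‖)) := by
        gcongr
        exact le_opNorm _ v
    _ = _ := by ring

variable [CompleteSpace W]

theorem convolution_add_sub_eq_intervalIntegral (hf : ContDiff ℝ 1 f)
    (hgc : Continuous g) (hg : ∀ x, ‖g x‖ ≤ B * (1 + ‖x‖) ^ r)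
    (hint : Integrable (fun t => (1 + ‖t‖) ^ r * ‖f t‖) μ)
    (hint' : Integrable (fun t => (1 + ‖t‖) ^ r * ‖fderiv ℝ f t‖) μ) (L : G →L[ℝ] H →L[ℝ] W)
    (x v : V) :
    (f ⋆[L, μ] g) (x + v) - (f ⋆[L, μ] g) x =
      ∫ s in (0 : ℝ)..1, (fderiv ℝ f ⋆[L.precompL V, μ] g) (x + s • v) v := by
  have hf' : Continuous (fderiv ℝ f) := hf.continuous_fderiv one_ne_zero
  have hex := convolutionExists_of_polynomial_growth hf.continuous hgc hg hint L
  have hex' := convolutionExists_of_polynomial_growth hf' hgc hg hint' (L.precompL V)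
  have hshift : ∀ w, (f ⋆[L, μ] g) (x + w) = ∫ t, L (f (t + w)) (g (x - t)) ∂μ := fun w => by
    rw [convolution_def, ← integral_add_right_eq_self _ w]
    simp_rw [add_sub_add_right_eq_sub]
  have hshift' : ∀ w, (fderiv ℝ f ⋆[L.precompL V, μ] g) (x + w) v =
      ∫ t, L (fderiv ℝ f (t + w) v) (g (x - t)) ∂μ := fun w => by
    rw [convolution_def, ContinuousLinearMap.integral_apply (hex' _),
      ← integral_add_right_eq_self _ w]
    simp_rw [add_sub_add_right_eq_sub, precompL_apply]
  have hint_shift : Integrable (fun t => L (f (t + v)) (g (x - t))) μ := by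
    simpa using (hex (x + v)).comp_add_right v
  calc (f ⋆[L, μ] g) (x + v) - (f ⋆[L, μ] g) x
      = ∫ t, (L (f (t + v)) (g (x - t)) - L (f t) (g (x - t))) ∂μ := by
        rw [hshift, convolution_def, integral_sub hint_shift (hex x)]
    _ = ∫ t, (∫ s : ℝ in Ioc (0 : ℝ) 1, L (fderiv ℝ f (t + s • v) v) (g (x - t))) ∂μ := by
        simp_rw [apply_add_sub_eq_setIntegral_fderiv hf]
    _ = ∫ s : ℝ in Ioc (0 : ℝ) 1, ∫ t, L (fderiv ℝ f (t + s • v) v) (g (x - t)) ∂μ :=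
        integral_integral_swap (integrable_prod_fderiv_add_smul_apply hf hgc hg hint' L x v)
    _ = _ := by simp_rw [hshift', intervalIntegral.integral_of_le zero_le_one]

theorem hasFDerivAt_convolution_of_polynomial_growth (hf : ContDiff ℝ 1 f)
    (hgc : Continuous g) (hg : ∀ x, ‖g x‖ ≤ B * (1 + ‖x‖) ^ r)
    (hint : Integrable (fun t => (1 + ‖t‖) ^ r * ‖f t‖) μ)
    (hint' : Integrable (fun t => (1 + ‖t‖) ^ r * ‖fderiv ℝ f t‖) μ) (L : G →L[ℝ] H →L[ℝ] W)
    (x : V) :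
    HasFDerivAt (f ⋆[L, μ] g) ((fderiv ℝ f ⋆[L.precompL V, μ] g) x) x :=
  hasFDerivAt_of_sub_eq_intervalIntegral
    (continuous_convolution_of_polynomial_growth (hf.continuous_fderiv one_ne_zero) hgc hg hint' _)
    (convolution_add_sub_eq_intervalIntegral hf hgc hg hint hint' L x)

universe u v

-- `V`, `G`, `W` share a universe: the induction replaces `G` and `W` by `V →L[ℝ] G`, `V →L[ℝ] W`.
theorem contDiff_convolution_of_polynomial_growth {V G W : Type u} {H : Type v}
    [NormedAddCommGroup V] [NormedSpace ℝ V] [FiniteDimensional ℝ V] [MeasurableSpace V]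
    [BorelSpace V] {μ : Measure V} [μ.IsAddHaarMeasure] [NormedAddCommGroup G] [NormedSpace ℝ G]
    [NormedAddCommGroup H] [NormedSpace ℝ H] [NormedAddCommGroup W] [NormedSpace ℝ W]
    [CompleteSpace W] {f : V → G} {g : V → H} {B : ℝ} {r m : ℕ} (hf : ContDiff ℝ m f)
    (hgc : Continuous g) (hg : ∀ x, ‖g x‖ ≤ B * (1 + ‖x‖) ^ r)
    (hint : ∀ n ≤ m, Integrable (fun t => (1 + ‖t‖) ^ r * ‖iteratedFDeriv ℝ n f t‖) μ)
    (L : G →L[ℝ] H →L[ℝ] W) : ContDiff ℝ m (f ⋆[L, μ] g) := by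
  induction m generalizing G W with
  | zero =>
    have hint₀ := hint 0 le_rfl
    simp_rw [norm_iteratedFDeriv_zero] at hint₀
    exact contDiff_zero.2
      (continuous_convolution_of_polynomial_growth hf.continuous hgc hg hint₀ L)
  | succ m ih =>
    have hint₀ := hint 0 m.succ.zero_le
    have hint₁ := hint 1 (Nat.succ_le_succ m.zero_le)
    simp_rw [norm_iteratedFDeriv_zero] at hint₀
    simp_rw [norm_iteratedFDeriv_one] at hint₁
    push_cast at hf ⊢
    have hf₁ : ContDiff ℝ 1 f := hf.of_le (by simp)
    refine contDiff_succ_iff_hasFDerivAt.2 ⟨_, ih (hf.fderiv_right le_rfl) (fun n hn => ?_) _,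
      hasFDerivAt_convolution_of_polynomial_growth hf₁ hgc hg hint₀ hint₁ L⟩
    simpa only [norm_iteratedFDeriv_fderiv] using hint (n + 1) (Nat.succ_le_succ hn)

end Smoothness

section Kernel

theorem norm_le_sum_norm_apply_orthonormalBasis {𝕜 ι κ V W : Type*} [RCLike 𝕜] [Fintype ι]
    [Fintype κ] [DecidableEq κ] [NormedAddCommGroup V] [InnerProductSpace 𝕜 V]
    [NormedAddCommGroup W] [NormedSpace 𝕜 W] (b : OrthonormalBasis ι 𝕜 V)
    (T : ContinuousMultilinearMap 𝕜 (fun _ : κ => V) W) :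
    ‖T‖ ≤ ∑ α : κ → ι, ‖T fun j => b (α j)‖ := by
  refine T.opNorm_le_bound (by positivity) fun x => ?_
  calc ‖T x‖ = ‖∑ α : κ → ι, (∏ j, b.repr (x j) (α j)) • T fun j => b (α j)‖ := by
        simp_rw [← T.map_smul_univ]
        rw [← T.map_sum fun j i => b.repr (x j) i • b i]
        simp_rw [b.sum_repr]
    _ ≤ ∑ α : κ → ι, (∏ j, ‖b.repr (x j) (α j)‖) * ‖T fun j => b (α j)‖ := by
        simpa only [norm_smul, norm_prod] using norm_sum_le Finset.univ
          fun α : κ → ι => (∏ j, b.repr (x j) (α j)) • T fun j => b (α j)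
    _ ≤ ∑ α : κ → ι, (∏ j, ‖x j‖) * ‖T fun j => b (α j)‖ := by
        gcongr with α _ j
        exact (PiLp.norm_apply_le _ _).trans_eq (b.repr.norm_map _)
    _ = (∑ α : κ → ι, ‖T fun j => b (α j)‖) * ∏ j, ‖x j‖ := by
        rw [← Finset.mul_sum, mul_comm]

theorem integrable_one_add_norm_pow_mul {V G : Type*} [NormedAddCommGroup V] [ProperSpace V]
    [MeasurableSpace V] [BorelSpace V] {μ : Measure V} [NormedAddCommGroup G] {h : V → G} {r : ℕ}
    (hloc : LocallyIntegrable h μ) (hint : Integrable (fun u => ‖u‖ ^ r * ‖h u‖) μ) :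
    Integrable (fun u => (1 + ‖u‖) ^ r * ‖h u‖) μ := by
  have hball : Integrable ((Metric.closedBall 0 1).indicator fun u => ‖h u‖) μ :=
    (integrable_indicator_iff Metric.isClosed_closedBall.measurableSet).2
      (hloc.integrableOn_isCompact (isCompact_closedBall 0 1)).norm
  refine ((hball.add hint).const_mul (2 ^ r)).mono' ?_ (.of_forall fun u => ?_)
  · exact (by fun_prop : Continuous fun u : V => (1 + ‖u‖) ^ r).aestronglyMeasurable.mul
      hloc.aestronglyMeasurable.norm
  rw [Real.norm_of_nonneg (by positivity), Pi.add_apply]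
  rcases le_total ‖u‖ 1 with hu | hu
  · rw [indicator_of_mem (mem_closedBall_zero_iff.2 hu)]
    calc (1 + ‖u‖) ^ r * ‖h u‖ ≤ 2 ^ r * ‖h u‖ := by gcongr; linarith
      _ ≤ 2 ^ r * (‖h u‖ + ‖u‖ ^ r * ‖h u‖) := by
        gcongr; exact le_add_of_nonneg_right (by positivity)
  · calc (1 + ‖u‖) ^ r * ‖h u‖ ≤ (2 * ‖u‖) ^ r * ‖h u‖ := by gcongr; linarith
      _ = 2 ^ r * (0 + ‖u‖ ^ r * ‖h u‖) := by rw [mul_pow]; ring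
      _ ≤ _ := by gcongr; exact indicator_nonneg (fun u _ => norm_nonneg (h u)) u

theorem integrable_one_add_norm_pow_mul_norm_iteratedFDeriv {ι V W : Type*} [Fintype ι]
    [NormedAddCommGroup V] [InnerProductSpace ℝ V] [ProperSpace V] [MeasurableSpace V]
    [BorelSpace V] [NormedAddCommGroup W] [NormedSpace ℝ W] {μ : Measure V}
    [IsLocallyFiniteMeasure μ] {k : V → W} {n r : ℕ} (hk : ContDiff ℝ n k)
    (b : OrthonormalBasis ι ℝ V)
    (hint : ∀ α : Fin n → ι,
      Integrable (fun u => ‖u‖ ^ r * ‖iteratedFDeriv ℝ n k u fun j => b (α j)‖) μ) :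
    Integrable (fun u => (1 + ‖u‖) ^ r * ‖iteratedFDeriv ℝ n k u‖) μ := by
  have hcont : Continuous (iteratedFDeriv ℝ n k) := hk.continuous_iteratedFDeriv le_rfl
  refine integrable_one_add_norm_pow_mul hcont.locallyIntegrable ?_
  refine (integrable_finsetSum Finset.univ fun α _ => hint α).mono'
    (by fun_prop : Continuous fun u => ‖u‖ ^ r * ‖iteratedFDeriv ℝ n k u‖).aestronglyMeasurable
    (.of_forall fun u => ?_)
  rw [Real.norm_of_nonneg (by positivity), ← Finset.mul_sum]
  exact mul_le_mul_of_nonneg_left (norm_le_sum_norm_apply_orthonormalBasis b _) (by positivity)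

theorem integral_smul_comp_add_eq_convolution {V W : Type*} [AddCommGroup V] [MeasurableSpace V]
    [MeasurableNeg V] [NormedAddCommGroup W] [NormedSpace ℝ W] (μ : Measure V) [μ.IsNegInvariant]
    (k : V → ℝ) (f : V → W) (z : V) :
    ∫ u, k u • f (z + u) ∂μ = ((fun t => k (-t)) ⋆[lsmul ℝ ℝ, μ] f) z := by
  rw [← integral_neg_eq_self]
  simp [convolution_def, sub_eq_add_neg]

theorem integrable_mul_norm_iteratedFDeriv_comp_neg {V W : Type*} [NormedAddCommGroup V]
    [NormedSpace ℝ V] [MeasurableSpace V] [MeasurableNeg V] [NormedAddCommGroup W]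
    [NormedSpace ℝ W] {μ : Measure V} [μ.IsNegInvariant] {k : V → W} {n r : ℕ}
    (hint : Integrable (fun u => (1 + ‖u‖) ^ r * ‖iteratedFDeriv ℝ n k u‖) μ) :
    Integrable (fun t => (1 + ‖t‖) ^ r * ‖iteratedFDeriv ℝ n (fun t => k (-t)) t‖) μ := by
  have hneg : ∀ t, ‖iteratedFDeriv ℝ n (fun t => k (-t)) t‖ = ‖iteratedFDeriv ℝ n k (-t)‖ :=
    fun t => (LinearIsometryEquiv.neg ℝ).norm_iteratedFDeriv_comp_right k t n
  simpa [hneg] using hint.comp_neg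

end Kernel

section PiecewiseAffine

variable {ι V W : Type*} [Finite ι] [NormedAddCommGroup V] [NormedSpace ℝ V]
  [NormedAddCommGroup W] [NormedSpace ℝ W]

theorem exists_frequently_sub_eq_smul {γ : ℝ → W} {b c : ι → W} (hγ : Continuous γ)
    (h : ∀ t, ∃ i, γ t = b i + t • c i) (t : ℝ) :
    ∃ i, ∃ᶠ s in 𝓝[>] t, γ s - γ t = (s - t) • c i := by
  obtain ⟨i, hi⟩ : ∃ i, ∃ᶠ s in 𝓝[>] t, γ s = b i + s • c i := by
    by_contra! hnot
    obtain ⟨s, hs⟩ := (eventually_all.2 hnot).exists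
    exact (h s).elim hs
  have hclosed : IsClosed {s | γ s = b i + s • c i} := isClosed_eq hγ (by fun_prop)
  have ht : γ t = b i + t • c i :=
    hclosed.mem_of_frequently_of_tendsto hi (tendsto_id.mono_left nhdsWithin_le_nhds)
  refine ⟨i, hi.mono fun s hs => ?_⟩
  rw [hs, ht, sub_smul, add_sub_add_left_eq_sub]

theorem sub_mem_convexHull_of_piecewise_affine {γ : ℝ → W} {b c : ι → W} (hγ : Continuous γ)
    (h : ∀ t, ∃ i, γ t = b i + t • c i) : γ 1 - γ 0 ∈ convexHull ℝ (range c) := by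
  by_contra hmem
  obtain ⟨q, u, hqc, hqγ⟩ := geometric_hahn_banach_closed_point (convex_convexHull ℝ _)
    ((finite_range c).isClosed_convexHull ℝ) hmem
  have hslope : ∀ t ∈ Ico (0 : ℝ) 1, ∀ ρ, u < ρ →
      ∃ᶠ s in 𝓝[>] t, slope (fun s => q (γ s - γ 0)) t s < ρ := fun t _ ρ hρ => by
    obtain ⟨i, hi⟩ := exists_frequently_sub_eq_smul hγ h t
    refine (hi.and_eventually self_mem_nhdsWithin).mono fun s ⟨hs, hts⟩ => ?_
    rw [slope_def_field, ← map_sub, sub_sub_sub_cancel_right, hs, map_smul, smul_eq_mul,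
      mul_div_cancel_left₀ _ (sub_pos.2 hts).ne']
    exact (hqc _ (subset_convexHull ℝ _ ⟨i, rfl⟩)).trans hρ
  have hle : q (γ 1 - γ 0) ≤ u * 1 := image_le_of_liminf_slope_right_le_deriv_boundary
    (B := fun t => u * t) (B' := fun _ => u) (by fun_prop) (by simp) (by fun_prop)
    (fun t _ => by simpa using ((hasDerivAt_id t).const_mul u).hasDerivWithinAt) hslope
    (right_mem_Icc.2 zero_le_one)
  linarith

theorem hasSecantsIn_of_piecewise_affine {f : V → W} {φ : ι → W} {A : ι → V →L[ℝ] W}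
    (hf : Continuous f) (h : ∀ z, ∃ i, f z = φ i + A i z) :
    HasSecantsIn (convexHull ℝ (range A)) f := by
  intro x y
  let ev : (V →L[ℝ] W) →L[ℝ] W := ContinuousLinearMap.apply ℝ W (x - y)
  have hsegment : f (y + (1 : ℝ) • (x - y)) - f (y + (0 : ℝ) • (x - y)) ∈
      convexHull ℝ (range fun i => ev (A i)) := by
    refine sub_mem_convexHull_of_piecewise_affine (b := fun i => φ i + A i y)
      (γ := fun t => f (y + t • (x - y))) (by fun_prop) fun t => ?_
    obtain ⟨i, hi⟩ := h (y + t • (x - y))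
    exact ⟨i, by rw [hi, map_add, map_smul, add_assoc]; rfl⟩
  rw [range_comp' ev A, ← ev.isBoundedLinearMap.toIsLinearMap.image_convexHull] at hsegment
  obtain ⟨B, hB, hBxy⟩ := hsegment
  exact ⟨B, hB, by simpa [ev] using hBxy.symm⟩

end PiecewiseAffine

section Determinants

theorem multilinear_pos_of_forall_mem_convexHull {ι : Type*} [Finite ι] {V : ι → Type*}
    [∀ i, AddCommGroup (V i)] [∀ i, Module ℝ (V i)] (q : MultilinearMap ℝ V ℝ)
    {S : ∀ i, Set (V i)} (hS : ∀ x, (∀ i, x i ∈ S i) → 0 < q x) (x : ∀ i, V i)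
    (hx : ∀ i, x i ∈ convexHull ℝ (S i)) : 0 < q x := by
  classical
  have := Fintype.ofFinite ι
  suffices ∀ (s : Finset ι) (x : ∀ i, V i), (∀ i ∈ s, x i ∈ convexHull ℝ (S i)) →
      (∀ i ∉ s, x i ∈ S i) → 0 < q x from this Finset.univ x (fun i _ => hx i) (by simp)
  intro s
  induction s using Finset.induction_on with
  | empty => exact fun x _ hx => hS x (by simpa using hx)
  | insert i s hi ih =>
    intro x hx hxS
    have hhalf : convexHull ℝ (S i) ⊆ {y | 0 < q.toLinearMap x i y} := by
      refine convexHull_min (fun y hy => ih _ (fun j hj => ?_) fun j hj => ?_)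
        (convex_halfSpace_gt (q.toLinearMap x i).isLinear 0)
      · rw [update_of_ne (ne_of_mem_of_not_mem hj hi)]
        exact hx j (Finset.mem_insert_of_mem hj)
      · rcases eq_or_ne j i with rfl | hji
        · rwa [update_self]
        · rw [update_of_ne hji]
          exact hxS j (by simp [hji, hj])
    simpa using hhalf (hx i (Finset.mem_insert_self i s))

theorem det_mul_pos_of_mem_convexHull_of_selection {ι κ V : Type*} [Finite ι] [AddCommGroup V]
    [Module ℝ V] (b : Module.Basis ι ℝ V) {A : κ → V →ₗ[ℝ] V} {e : ℝ}
    (hdet : ∀ ℓ, 0 < LinearMap.det (A ℓ) * e)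
    (hsel : ∀ σ : ι → κ, ∃ ℓ, ∀ i, A (σ i) (b i) = A ℓ (b i)) {B : V →ₗ[ℝ] V}
    (hB : B ∈ convexHull ℝ (range A)) : 0 < LinearMap.det B * e := by
  classical
  have := Fintype.ofFinite ι
  have hq : ∀ C : V →ₗ[ℝ] V, (e • b.det.toMultilinearMap) (C ∘ b) = LinearMap.det C * e := by
    intro C
    simp [b.det_comp, b.det_self, mul_comm]
  rw [← hq]
  refine multilinear_pos_of_forall_mem_convexHull _ (S := fun i => range fun ℓ => A ℓ (b i))
    (fun x hx => ?_) _ fun i => ?_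
  · choose σ hσ using hx
    obtain ⟨ℓ, hℓ⟩ := hsel σ
    obtain rfl : x = A ℓ ∘ b := funext fun i => (hσ i).symm.trans (hℓ i)
    exact (hdet ℓ).trans_eq (hq _).symm
  · have himage := (LinearMap.applyₗ (b i) : (V →ₗ[ℝ] V) →ₗ[ℝ] V).image_convexHull (range A)
    rw [← range_comp] at himage
    exact himage.subset (mem_image_of_mem _ hB)

variable {ι V W : Type*} [AddCommGroup V] [Module ℝ V]

/-- The cone `C_I` written in the coordinates of a basis `b`, which plays the role of the dual basis
of the vectors `a₁, …, a_p` of `coneOf`. -/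
def signCone (b : Module.Basis ι ℝ V) (I : Set ι) : Set V :=
  {z | (∀ i ∈ I, 0 ≤ b.repr z i) ∧ ∀ i ∉ I, b.repr z i < 0}

theorem eq_of_mem_signCone {b : Module.Basis ι ℝ V} {I J : Set ι} {z : V}
    (hI : z ∈ signCone b I) (hJ : z ∈ signCone b J) : I = J := by
  ext i
  refine ⟨fun hi => ?_, fun hi => ?_⟩ <;> by_contra hi'
  · exact (hI.1 i hi).not_gt (hJ.2 i hi')
  · exact (hJ.1 i hi).not_gt (hI.2 i hi')

theorem signCone_nonempty [Finite ι] (b : Module.Basis ι ℝ V) (I : Set ι) :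
    (signCone b I).Nonempty := by
  classical
  refine ⟨b.equivFun.symm fun i => if i ∈ I then 1 else -1, fun i hi => ?_, fun i hi => ?_⟩ <;>
  simp [← b.equivFun_apply, hi]

theorem add_smul_mem_signCone {b : Module.Basis ι ℝ V} {I : Set ι} {x w : V}
    (hxI : ∀ i ∈ I, 0 ≤ b.repr x i) (hxI' : ∀ i ∉ I, b.repr x i ≤ 0) (hw : w ∈ signCone b I)
    {ε : ℝ} (hε : 0 < ε) : x + ε • w ∈ signCone b I := by
  simp only [signCone, mem_ofPred_eq, map_add, map_smul, Finsupp.add_apply, Finsupp.smul_apply,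
    smul_eq_mul]
  exact ⟨fun i hi => add_nonneg (hxI i hi) (mul_nonneg hε.le (hw.1 i hi)),
    fun i hi => add_neg_of_nonpos_of_neg (hxI' i hi) (mul_neg_of_pos_of_neg hε (hw.2 i hi))⟩

theorem mem_closure_signCone [Finite ι] [TopologicalSpace V] [ContinuousAdd V]
    [ContinuousSMul ℝ V] {b : Module.Basis ι ℝ V} {I : Set ι} {x : V}
    (hxI : ∀ i ∈ I, 0 ≤ b.repr x i) (hxI' : ∀ i ∉ I, b.repr x i ≤ 0) :
    x ∈ closure (signCone b I) := by
  obtain ⟨w, hw⟩ := signCone_nonempty b I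
  have hlim : Tendsto (fun ε : ℝ => x + ε • w) (𝓝[>] 0) (𝓝 x) :=
    ((by fun_prop : Continuous fun ε : ℝ => x + ε • w).tendsto' 0 x (by simp)).mono_left
      nhdsWithin_le_nhds
  exact mem_closure_of_tendsto hlim
    (eventually_mem_nhdsWithin.mono fun ε hε => add_smul_mem_signCone hxI hxI' hw hε)

open Classical in
theorem apply_basis_eq_of_eqOn_signCone [Finite ι] [TopologicalSpace V] [ContinuousAdd V]
    [ContinuousSMul ℝ V] [AddCommGroup W] [Module ℝ W] [TopologicalSpace W] [T2Space W]
    {b : Module.Basis ι ℝ V} {I : Set ι} {f : V → W} {A : V →L[ℝ] W} (hf : Continuous f)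
    (hfA : EqOn f A (signCone b I)) (i : ι) :
    A (b i) = if i ∈ I then f (b i) else -f (-b i) := by
  have hclosure : EqOn f A (closure (signCone b I)) := hfA.closure hf A.continuous
  split_ifs with hi
  · refine (hclosure (mem_closure_signCone (fun j _ => ?_) fun j hj => ?_)).symm
    · rcases eq_or_ne i j with rfl | hij <;> simp [*]
    · simp [(ne_of_mem_of_not_mem hi hj)]
  · rw [hclosure (mem_closure_signCone (fun j hj => ?_) fun j _ => ?_), map_neg, neg_neg]
    · simp [(ne_of_mem_of_not_mem hj hi).symm]
    · rcases eq_or_ne i j with rfl | hij <;> simp [*]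

theorem exists_forall_apply_basis_eq_of_eqOn_signCone {κ : Type*} [Finite ι] [TopologicalSpace V]
    [ContinuousAdd V] [ContinuousSMul ℝ V] [AddCommGroup W] [Module ℝ W] [TopologicalSpace W]
    [T2Space W] {b : Module.Basis ι ℝ V} {f : V → W} {A : κ → V →L[ℝ] W} (hf : Continuous f)
    (hcone : ∀ ℓ, ∃ I, EqOn f (A ℓ) (signCone b I))
    (hpiece : ∀ I, ∃ ℓ, EqOn f (A ℓ) (signCone b I)) (σ : ι → κ) :
    ∃ ℓ, ∀ i, A (σ i) (b i) = A ℓ (b i) := by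
  choose I hI using hcone
  obtain ⟨ℓ, hℓ⟩ := hpiece {i | i ∈ I (σ i)}
  refine ⟨ℓ, fun i => ?_⟩
  rw [apply_basis_eq_of_eqOn_signCone hf (hI _), apply_basis_eq_of_eqOn_signCone hf hℓ]
  rfl

theorem map_eq_of_finite_range {X G : Type*} [TopologicalSpace X] [PreconnectedSpace X]
    [TopologicalSpace G] [T1Space G] {g : X → G} (hg : Continuous g) (hfin : (range g).Finite)
    (x y : X) : g x = g y := by
  by_contra hne
  exact (isPreconnected_range hg).infinite_of_nontrivial
    ⟨_, mem_range_self x, _, mem_range_self y, hne⟩ hfin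

theorem map_eq_of_forall_add_mem {κ V W : Type*} [Finite κ] [AddCommGroup V] [Module ℝ V]
    [TopologicalSpace V] [IsTopologicalAddGroup V] [ContinuousSMul ℝ V] [AddCommGroup W]
    [Module ℝ W] [TopologicalSpace W] [IsTopologicalAddGroup W] [T1Space W] {f : V → W}
    {Z : κ → Set V} {φ : κ → W} {A : κ → V →L[ℝ] W} (hf : Continuous f)
    (hne : ∀ ℓ, (Z ℓ).Nonempty) (hcover : ∀ z, ∃ ℓ, z ∈ Z ℓ)
    (hfZ : ∀ ℓ, ∀ z ∈ Z ℓ, f z = φ ℓ + A ℓ z) {v : V} (hv : ∀ ℓ, ∀ z ∈ Z ℓ, z + v ∈ Z ℓ)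
    (ℓ ℓ' : κ) : A ℓ v = A ℓ' v := by
  have hdiff : ∀ ℓ, ∀ z ∈ Z ℓ, f (z + v) - f z = A ℓ v := fun ℓ z hz => by
    rw [hfZ ℓ _ (hv ℓ z hz), hfZ ℓ z hz, map_add]
    abel
  obtain ⟨z, hz⟩ := hne ℓ
  obtain ⟨z', hz'⟩ := hne ℓ'
  rw [← hdiff ℓ z hz, ← hdiff ℓ' z' hz']
  exact map_eq_of_finite_range (g := fun z => f (z + v) - f z) (by fun_prop)
    ((finite_range fun ℓ => A ℓ v).subset (range_subset_iff.2 fun z =>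
      (hcover z).imp fun ℓ hℓ => (hdiff ℓ z hℓ).symm)) z z'

theorem exists_basis_forall_repr_eq_inner {ι V : Type*} [Finite ι] [NormedAddCommGroup V]
    [InnerProductSpace ℝ V] {a : ι → V} (hli : LinearIndependent ℝ a)
    (hspan : Submodule.span ℝ (range a) = ⊤) :
    ∃ b : Module.Basis ι ℝ V, ∀ z i, b.repr z i = inner ℝ z (a i) := by
  classical
  have hnondeg : (innerₗ V).Nondegenerate :=
    ⟨fun x hx => inner_self_eq_zero.1 (hx x), fun x hx => inner_self_eq_zero.1 (hx x)⟩
  refine ⟨LinearMap.BilinForm.dualBasis (innerₗ V) hnondeg (.mk hli hspan.ge), fun z i => ?_⟩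
  rw [LinearMap.BilinForm.dualBasis_repr_apply, Module.Basis.mk_apply, innerₗ_apply_apply]

theorem exists_basis_forall_ne_inner_eq_zero {V : Type*} [NormedAddCommGroup V]
    [InnerProductSpace ℝ V] [FiniteDimensional ℝ V] {a : V} (ha : a ≠ 0) :
    ∃ (u : Finset V) (b : Module.Basis u ℝ V) (i₀ : u), ∀ i ≠ i₀, inner ℝ a (b i) = 0 := by
  obtain ⟨u, b, hau, hb⟩ := Orthonormal.exists_orthonormalBasis_extension
    (𝕜 := ℝ) (v := {‖a‖⁻¹ • a}) (by simp [norm_smul, ha])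
  let i₀ : u := ⟨‖a‖⁻¹ • a, hau rfl⟩
  have hbi₀ : b i₀ = ‖a‖⁻¹ • a := congrFun hb i₀
  refine ⟨u, b.toBasis, i₀, fun i hi => ?_⟩
  have horth : inner ℝ (‖a‖⁻¹ • a) (b i) = 0 := hbi₀ ▸ b.orthonormal.2 hi.symm
  simpa [inner_smul_left, ha] using horth

section EuclideanSpace

variable {p L : ℕ} {f : E p → E p} {Z : Fin L → Set (E p)} {φ : Fin L → E p}
  {Φ : Fin L → Matrix (Fin p) (Fin p) ℝ}

theorem sum_mul_eq_inner (x y : E p) : ∑ j, x j * y j = inner ℝ x y := by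
  simp [PiLp.inner_apply, mul_comm]

theorem det_mul_pos_of_mem_convexHull_matrix {ι : Type*} [Finite ι] (b : Module.Basis ι ℝ (E p))
    {e : ℝ} (hdet : ∀ ℓ, 0 < (Φ ℓ).det * e)
    (hsel : ∀ σ : ι → Fin L, ∃ ℓ, ∀ i, mulVecE (Φ (σ i)) (b i) = mulVecE (Φ ℓ) (b i))
    {M : Matrix (Fin p) (Fin p) ℝ} (hM : M ∈ convexHull ℝ (range Φ)) : 0 < M.det * e := by
  have hdetLin : ∀ M : Matrix (Fin p) (Fin p) ℝ, LinearMap.det (toEuclideanLin M) = M.det := by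
    simp [toEuclideanLin_eq_toLin_orthonormal]
  have hMlin : toEuclideanLin M ∈ convexHull ℝ (range fun ℓ => toEuclideanLin (Φ ℓ)) := by
    rw [range_comp' toEuclideanLin Φ]
    exact (toEuclideanLin.toLinearMap.image_convexHull (range Φ)).subset (mem_image_of_mem _ hM)
  rw [← hdetLin]
  exact det_mul_pos_of_mem_convexHull_of_selection b (fun ℓ => by rw [hdetLin]; exact hdet ℓ)
    hsel hMlin

theorem IsThresholdAffine.det_mul_pos_of_mem_convexHull {e : ℝ} (hf : IsThresholdAffine f Z φ Φ)
    (hdet : ∀ ℓ, 0 < (Φ ℓ).det * e) {M : Matrix (Fin p) (Fin p) ℝ}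
    (hM : M ∈ convexHull ℝ (range Φ)) : 0 < M.det * e := by
  obtain ⟨⟨hcont, -, hne, hpart, hfZ⟩, a, ha, τ, -, -, -, hZ⟩ := hf
  obtain ⟨u, b, i₀, hb⟩ := exists_basis_forall_ne_inner_eq_zero ha
  refine det_mul_pos_of_mem_convexHull_matrix b hdet (fun σ => ⟨σ i₀, fun i => ?_⟩) hM
  rcases eq_or_ne i i₀ with rfl | hi
  · rfl
  · refine map_eq_of_forall_add_mem (A := fun ℓ => toEuclideanCLM (𝕜 := ℝ) (Φ ℓ)) hcont hne
      (fun z => (hpart z).exists) hfZ (fun ℓ z hz => ?_) _ _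
    rw [hZ] at hz ⊢
    simpa [sum_mul_eq_inner, -PiLp.add_apply, inner_add_right, hb i hi] using hz

theorem IsPiecewiseLinear.det_mul_pos_of_mem_convexHull {e : ℝ} (hf : IsPiecewiseLinear f Z φ Φ)
    (hdet : ∀ ℓ, 0 < (Φ ℓ).det * e) {M : Matrix (Fin p) (Fin p) ℝ}
    (hM : M ∈ convexHull ℝ (range Φ)) : 0 < M.det * e := by
  obtain ⟨⟨hcont, -, hne, hpart, hfZ⟩, hφ, a, hli, hspan, hZ⟩ := hf
  obtain ⟨b, hb⟩ := exists_basis_forall_repr_eq_inner hli hspan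
  have hcone : ∀ I, coneOf a I = signCone b I := fun I => by
    simp [coneOf, signCone, hb, sum_mul_eq_inner, real_inner_comm]
  have hmem : ∀ ℓ, ∀ z ∈ Z ℓ, ∃ I, z ∈ signCone b I ∧
      EqOn f (toEuclideanCLM (𝕜 := ℝ) (Φ ℓ)) (signCone b I) := fun ℓ z hz => by
    obtain ⟨S, hS⟩ := hZ ℓ
    simp_rw [hcone] at hS
    obtain ⟨I, hI, hzI⟩ := mem_iUnion₂.1 (hS ▸ hz)
    refine ⟨I, hzI, fun w hw => (hfZ ℓ w (hS ▸ mem_biUnion hI hw)).trans ?_⟩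
    rw [hφ, zero_add]
    rfl
  refine det_mul_pos_of_mem_convexHull_matrix b hdet
    (exists_forall_apply_basis_eq_of_eqOn_signCone (A := fun ℓ => toEuclideanCLM (𝕜 := ℝ) (Φ ℓ))
      hcont (fun ℓ => ?_) fun I => ?_) hM
  · obtain ⟨z, hz⟩ := hne ℓ
    exact (hmem ℓ z hz).imp fun I => And.right
  · obtain ⟨z, hz⟩ := signCone_nonempty b I
    obtain ⟨ℓ, hℓ, -⟩ := hpart z
    obtain ⟨J, hzJ, hJ⟩ := hmem ℓ z hℓ
    exact ⟨ℓ, eq_of_mem_signCone hz hzJ ▸ hJ⟩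

end EuclideanSpace

end Determinants

section Smoothing

theorem exists_norm_le_mul_one_add_norm_of_lipschitzWith {V W : Type*} [SeminormedAddCommGroup V]
    [SeminormedAddCommGroup W] {f : V → W} {C : ℝ≥0} (hf : LipschitzWith C f) :
    ∃ B : ℝ, ∀ x, ‖f x‖ ≤ B * (1 + ‖x‖) ^ 1 := by
  refine ⟨C + ‖f 0‖, fun x => ?_⟩
  have hx : ‖f x - f 0‖ ≤ C * ‖x‖ := by simpa using hf.norm_sub_le x 0
  have hx' : ‖f x‖ ≤ ‖f x - f 0‖ + ‖f 0‖ := by simpa using norm_add_le (f x - f 0) (f 0)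
  nlinarith [mul_nonneg (norm_nonneg (f 0)) (norm_nonneg x), C.coe_nonneg]

theorem HasSecantsIn.integral_smul_comp_add {V W : Type*} [NormedAddCommGroup V] [NormedSpace ℝ V]
    [FiniteDimensional ℝ V] [MeasurableSpace V] [BorelSpace V] {μ : Measure V}
    [μ.IsNegInvariant] [NormedAddCommGroup W] [NormedSpace ℝ W] [CompleteSpace W]
    {𝒜 : Set (V →L[ℝ] W)} {f : V → W} {k : V → ℝ} (hf : HasSecantsIn 𝒜 f) (h𝒜 : IsCompact 𝒜)
    (hconv : Convex ℝ 𝒜) (hk : Continuous k) (hk0 : ∀ u, 0 ≤ k u) (hk1 : ∫ u, k u ∂μ = 1)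
    (hint : Integrable (fun u => (1 + ‖u‖) ^ 1 * ‖k u‖) μ) :
    HasSecantsIn 𝒜 fun z => ∫ u, k u • f (z + u) ∂μ := by
  obtain ⟨C, hC⟩ := hf.exists_lipschitzWith h𝒜.isBounded
  obtain ⟨B, hB⟩ := exists_norm_le_mul_one_add_norm_of_lipschitzWith hC
  simp_rw [integral_smul_comp_add_eq_convolution]
  have hex : ConvolutionExists (fun t => k (-t)) f (lsmul ℝ ℝ) μ :=
    convolutionExists_of_polynomial_growth (hk.comp continuous_neg) hC.continuous hB
      (by simpa using hint.comp_neg) _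
  exact hf.convolution h𝒜 hconv (fun t => hk0 (-t)) (by rwa [integral_neg_eq_self]) hex

-- In `Type` because `contDiff_convolution_of_polynomial_growth` takes `V`, `W` and `ℝ` in one
-- universe.
theorem contDiff_integral_smul_comp_add {V W : Type} [NormedAddCommGroup V] [NormedSpace ℝ V]
    [FiniteDimensional ℝ V] [MeasurableSpace V] [BorelSpace V] {μ : Measure V}
    [μ.IsAddHaarMeasure] [NormedAddCommGroup W] [NormedSpace ℝ W] [CompleteSpace W]
    {f : V → W} {k : V → ℝ} {C : ℝ≥0} (hf : LipschitzWith C f) {m : ℕ} (hk : ContDiff ℝ m k)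
    (hint : ∀ n ≤ m, Integrable (fun u => (1 + ‖u‖) ^ 1 * ‖iteratedFDeriv ℝ n k u‖) μ) :
    ContDiff ℝ m fun z => ∫ u, k u • f (z + u) ∂μ := by
  obtain ⟨B, hB⟩ := exists_norm_le_mul_one_add_norm_of_lipschitzWith hf
  simp_rw [integral_smul_comp_add_eq_convolution]
  exact contDiff_convolution_of_polynomial_growth (hk.comp contDiff_neg) hf.continuous hB
    (fun n hn => integrable_mul_norm_iteratedFDeriv_comp_neg (hint n hn)) _

end Smoothing

variable {p L : ℕ} {f : E p → E p} {Z : Fin L → Set (E p)} {φ : Fin L → E p}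
  {Φ : Fin L → Matrix (Fin p) (Fin p) ℝ}

theorem IsPiecewiseAffine.hasSecantsIn (hf : IsPiecewiseAffine f Z φ Φ) :
    HasSecantsIn (convexHull ℝ (range fun ℓ => toEuclideanCLM (𝕜 := ℝ) (Φ ℓ))) f := by
  obtain ⟨hcont, -, -, hpart, hfZ⟩ := hf
  exact hasSecantsIn_of_piecewise_affine hcont fun z => (hpart z).exists.imp (hfZ · z)

theorem injective_of_mem_convexHull_toEuclideanCLM
    (hΦ : ∀ M ∈ convexHull ℝ (range Φ), M.det ≠ 0) :
    ∀ A ∈ convexHull ℝ (range fun ℓ => toEuclideanCLM (𝕜 := ℝ) (Φ ℓ)), Injective A := by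
  intro A hA
  have hlin : IsLinearMap ℝ (toEuclideanCLM (𝕜 := ℝ) (n := Fin p)) := ⟨map_add _, map_smul _⟩
  rw [range_comp' (toEuclideanCLM (𝕜 := ℝ)) Φ, ← hlin.image_convexHull] at hA
  obtain ⟨M, hM, rfl⟩ := hA
  refine (injective_iff_map_eq_zero _).2 fun x hx => ?_
  exact (WithLp.ofLp_eq_zero 2).1
    (eq_zero_of_mulVec_eq_zero (hΦ M hM) ((WithLp.ofLp_eq_zero 2).2 hx))

theorem integrable_one_add_norm_mul_norm_iteratedFDeriv {m : ℕ} {K : E p → ℝ}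
    (hK : ContDiff ℝ m K) (hKpos : ∀ u, 0 ≤ K u) (hKnorm : Integrable fun u : E p => ‖u‖ * K u)
    (hKderiv : ∀ n : ℕ, 1 ≤ n → n ≤ m → ∀ α : Fin n → Fin p,
      Integrable fun u : E p =>
        ‖u‖ * |iteratedFDeriv ℝ n K u (fun j => EuclideanSpace.single (α j) (1 : ℝ))|)
    {n : ℕ} (hn : n ≤ m) :
    Integrable fun u : E p => (1 + ‖u‖) ^ 1 * ‖iteratedFDeriv ℝ n K u‖ := by
  refine integrable_one_add_norm_pow_mul_norm_iteratedFDeriv (hK.of_le (by exact_mod_cast hn))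
    (EuclideanSpace.basisFun (Fin p) ℝ) fun α => ?_
  rcases n.eq_zero_or_pos with rfl | hn0
  · simpa [abs_of_nonneg (hKpos _)] using hKnorm
  · simpa using hKderiv n hn0 hn α

theorem smoothed_piecewise_affine_invertibility_general
    (p L m : ℕ) (f : E p → E p) (Z : Fin L → Set (E p)) (φ : Fin L → E p)
    (Φ : Fin L → Matrix (Fin p) (Fin p) ℝ) (hf : IsPiecewiseAffine f Z φ Φ)
    (hΦ : ∀ M ∈ convexHull ℝ (Set.range Φ), M.det ≠ 0)
    (K : E p → ℝ) (hKsmooth : ContDiff ℝ m K) (hKpos : ∀ u, 0 ≤ K u)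
    (hKone : (∫ u, K u) = 1)
    (hKnorm : Integrable fun u : E p => ‖u‖ * K u)
    (hKderiv : ∀ n : ℕ, 1 ≤ n → n ≤ m → ∀ α : Fin n → Fin p,
      Integrable fun u : E p =>
        ‖u‖ * |iteratedFDeriv ℝ n K u (fun j => EuclideanSpace.single (α j) (1 : ℝ))|) :
    Function.Bijective (fun z : E p => ∫ u : E p, K u • f (z + u)) ∧
    (∃ C : NNReal, LipschitzWith C (fun z : E p => ∫ u : E p, K u • f (z + u))) ∧
    (∃ C : NNReal,
      LipschitzWith C (Function.invFun (fun z : E p => ∫ u : E p, K u • f (z + u)))) ∧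
    ContDiff ℝ m (fun z : E p => ∫ u : E p, K u • f (z + u)) := by
  have hcompact : IsCompact (convexHull ℝ (range fun ℓ => toEuclideanCLM (𝕜 := ℝ) (Φ ℓ))) :=
    (finite_range _).isCompact_convexHull ℝ
  have hconv := convex_convexHull ℝ (range fun ℓ => toEuclideanCLM (𝕜 := ℝ) (Φ ℓ))
  have hint := fun n => integrable_one_add_norm_mul_norm_iteratedFDeriv hKsmooth hKpos hKnorm
    hKderiv (n := n)
  have hfK := hf.hasSecantsIn.integral_smul_comp_add hcompact hconv hKsmooth.continuous hKpos hKone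
    (by simpa using hint 0 m.zero_le)
  obtain ⟨C, hfC⟩ := hf.hasSecantsIn.exists_lipschitzWith hcompact.isBounded
  obtain ⟨hbij, hinv⟩ := hfK.bijective_and_exists_lipschitzWith_invFun rfl hcompact hconv
    (injective_of_mem_convexHull_toEuclideanCLM hΦ)
  exact ⟨hbij, hfK.exists_lipschitzWith hcompact.isBounded, hinv,
    contDiff_integral_smul_comp_add hfC hKsmooth hint⟩

/-- **Smoothing preserves invertibility** (Proposition `prop:pwacondition` (2)): if `f` is
piecewise linear or threshold affine and satisfies the determinantal condition, and `K` is an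
`m`-times continuously differentiable kernel with the stated moment and integrability
conditions, then the convolution `f_K(z) = ∫ f(z + u) K(u) du` is a bi-Lipschitz bijection
that is `m` times continuously differentiable. -/
theorem smoothed_piecewise_affine_invertibility
    (p L m : ℕ) (hp : 1 ≤ p) (hL : 1 ≤ L) (hm : 1 ≤ m)
    (f : E p → E p) (Z : Fin L → Set (E p)) (φ : Fin L → E p)
    (Φ : Fin L → Matrix (Fin p) (Fin p) ℝ)
    (hf : IsPiecewiseLinear f Z φ Φ ∨ IsThresholdAffine f Z φ Φ)
    (hdet : ∀ ℓ : Fin L, 0 < (Φ ℓ).det * (Φ ⟨0, hL⟩).det)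
    (K : E p → ℝ) (hKsmooth : ContDiff ℝ m K) (hKpos : ∀ u, 0 ≤ K u)
    (hKone : (∫ u, K u) = 1)
    (hKmean : ∀ i, (∫ u : E p, u i * K u) = 0)
    (hKnorm : Integrable fun u : E p => ‖u‖ * K u)
    (hKderiv : ∀ n : ℕ, 1 ≤ n → n ≤ m → ∀ α : Fin n → Fin p,
      Integrable fun u : E p =>
        ‖u‖ * |iteratedFDeriv ℝ n K u (fun j => EuclideanSpace.single (α j) (1 : ℝ))|) :
    Function.Bijective (fun z : E p => ∫ u : E p, K u • f (z + u)) ∧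
    (∃ C : NNReal, LipschitzWith C (fun z : E p => ∫ u : E p, K u • f (z + u))) ∧
    (∃ C : NNReal,
      LipschitzWith C (Function.invFun (fun z : E p => ∫ u : E p, K u • f (z + u)))) ∧
    ContDiff ℝ m (fun z : E p => ∫ u : E p, K u • f (z + u)) := by
  exact smoothed_piecewise_affine_invertibility_general p L m f Z φ Φ (hf.elim And.left And.left)
    (fun M hM => left_ne_zero_of_mul (hf.elim (·.det_mul_pos_of_mem_convexHull hdet hM)
      (·.det_mul_pos_of_mem_convexHull hdet hM)).ne') K hKsmooth hKpos hKone hKnorm hKderiv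
end
end
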